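/- arXiv:1001.3351 — 3 statements merged into one kernel-verified Lean document; each statement's English description precedes it below -/
import Mathlib

section
/- Let n ≥ 3. Consider the two curve-germs in ℝ^{2n} (coordinates (p₁,q₁,p₂,q₂,p₃,q₃,…,pₙ,qₙ), all unlisted coordinates equal to 0): B₁(t) = (t³, −(1/3)t⁶, 0, 0, −t², 0, …, 0) and B₂(t) = (t³, 0, −t², 0, 0, 0, …, 0) (the class (T₇)⁶). Then Lt(B₁,B₂) = 7, while Lt(B₁) = ∞ and Lt(B₂) = ∞. -/
noncomputable section

/-- The order of vanishing at `0` of a function `h : ℝ → ℝ`: the least `k ≥ 1` such that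
the `k`-th derivative of `h` at `0` is nonzero, and `∞` if all derivatives vanish at `0`. -/
def vanishOrder (h : ℝ → ℝ) : ℕ∞ :=
  sInf {k : ℕ∞ | ∃ m : ℕ, k = m ∧ 1 ≤ m ∧ iteratedDeriv m h 0 ≠ 0}

/-- The standard symplectic form `ω = ∑ dpᵢ ∧ dqᵢ` on `ℝ^{2n}`, where the coordinates are
ordered as `(p₁, q₁, …, pₙ, qₙ)` (so `pᵢ` has index `2(i-1)` and `qᵢ` has index `2(i-1)+1`). -/
def stdSymp (n : ℕ) (u v : Fin (2 * n) → ℝ) : ℝ :=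
  ∑ i : Fin n,
    (u ⟨2 * i.val, by have := i.isLt; omega⟩ * v ⟨2 * i.val + 1, by have := i.isLt; omega⟩ -
     u ⟨2 * i.val + 1, by have := i.isLt; omega⟩ * v ⟨2 * i.val, by have := i.isLt; omega⟩)

/-- A germ at `0` of a smooth Lagrangian submanifold of `(ℝ^{2n}, ω)`, given by `n` smooth
functions `H₁, …, Hₙ` vanishing at `0`, whose differentials are linearly independent at the
points of `{H₁ = ⋯ = Hₙ = 0}` near `0`, and such that `ω` vanishes on `ker DH(x)` at every
such point. -/
structure LagrangianGerm (n : ℕ) : Type where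
  H : Fin n → (Fin (2 * n) → ℝ) → ℝ
  smooth : ∀ i, ContDiff ℝ (⊤ : ℕ∞) (H i)
  zero_at_zero : ∀ i, H i 0 = 0
  lagrangian : ∃ U : Set (Fin (2 * n) → ℝ), IsOpen U ∧ 0 ∈ U ∧
    ∀ x ∈ U, (∀ i, H i x = 0) →
      LinearIndependent ℝ (fun i => fderiv ℝ (H i) x) ∧
      ∀ u v : Fin (2 * n) → ℝ, (∀ i, fderiv ℝ (H i) x u = 0) →
        (∀ i, fderiv ℝ (H i) x v = 0) → stdSymp n u v = 0

/-- The tangency order `t(f, L)` of a curve `f` to a Lagrangian submanifold-germ `L`: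
the minimum over `i` of the order of vanishing at `0` of `Hᵢ ∘ f`. -/
def tOrd {n : ℕ} (f : ℝ → Fin (2 * n) → ℝ) (L : LagrangianGerm n) : ℕ∞ :=
  ⨅ i : Fin n, vanishOrder (fun t => L.H i (f t))

/-- The Lagrangian tangency order `Lt(f)` of a curve `f`. -/
def Lt1 {n : ℕ} (f : ℝ → Fin (2 * n) → ℝ) : ℕ∞ :=
  ⨆ L : LagrangianGerm n, tOrd f L

/-- The Lagrangian tangency order `Lt(f, g)` of a multi-germ of two curves. -/
def Lt2 {n : ℕ} (f g : ℝ → Fin (2 * n) → ℝ) : ℕ∞ :=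
  ⨆ L : LagrangianGerm n, min (tOrd f L) (tOrd g L)

/-- The Lagrangian tangency order `Lt(f, g, h)` of a multi-germ of three curves. -/
def Lt3 {n : ℕ} (f g h : ℝ → Fin (2 * n) → ℝ) : ℕ∞ :=
  ⨆ L : LagrangianGerm n, min (tOrd f L) (min (tOrd g L) (tOrd h L))



section analysis
open Filter Topology Asymptotics

lemma aux_le (k : ℕ) : (k : WithTop ℕ∞) ≤ ((⊤ : ℕ∞) : WithTop ℕ∞) := by
  exact_mod_cast le_top

lemma aux_taylor {f : ℝ → ℝ} {k : ℕ} (hf : ContDiffAt ℝ (⊤ : ℕ∞) f 0) :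
    (fun t => f t - ∑ j ∈ Finset.range (k + 1),
      ((j.factorial : ℝ)⁻¹ * t ^ j) * iteratedDeriv j f 0) =o[𝓝 0] fun t : ℝ => t ^ k := by
  have hk : ContDiffAt ℝ k f 0 := hf.of_le (by exact_mod_cast le_top)
  have h1 : ∀ᶠ x in 𝓝 (0 : ℝ), ContDiffAt ℝ k f x := hk.eventually (by simp)
  obtain ⟨ε, hε, hb⟩ := Metric.eventually_nhds_iff_ball.1 h1
  have ho : IsOpen (Metric.ball (0 : ℝ) ε) := Metric.isOpen_ball
  have h0 : (0 : ℝ) ∈ Metric.ball (0 : ℝ) ε := Metric.mem_ball_self hε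
  have h2 := taylor_isLittleO (convex_ball (0 : ℝ) ε) h0
    (fun x hx => (hb x hx).contDiffWithinAt)
  rw [ho.nhdsWithin_eq h0] at h2
  simp only [taylor_within_apply, sub_zero, smul_eq_mul] at h2
  refine h2.congr_left fun t => ?_
  congr 1
  refine Finset.sum_congr rfl fun j _ => ?_
  rw [iteratedDerivWithin_of_isOpen ho h0]

lemma aux_little_of_deriv {f : ℝ → ℝ} {k : ℕ} (hf : ContDiffAt ℝ (⊤ : ℕ∞) f 0)
    (h : ∀ j ≤ k, iteratedDeriv j f 0 = 0) : f =o[𝓝 0] fun t : ℝ => t ^ k := by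
  have := aux_taylor (k := k) hf
  convert this using 2 with t
  rw [Finset.sum_eq_zero, sub_zero]
  intro j hj
  rw [h j (by simpa [Nat.lt_succ_iff] using hj), mul_zero]

lemma aux_deriv_of_little {f : ℝ → ℝ} {k : ℕ} (hf : ContDiffAt ℝ (⊤ : ℕ∞) f 0)
    (h : f =o[𝓝 0] fun t : ℝ => t ^ k) : ∀ j ≤ k, iteratedDeriv j f 0 = 0 := by
  induction k with
  | zero =>
    intro j hj
    obtain rfl : j = 0 := by omega
    have h1 : Tendsto f (𝓝 0) (𝓝 0) := by simpa using h
    simpa using tendsto_nhds_unique hf.continuousAt.tendsto h1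
  | succ k ih =>
    have hk : f =o[𝓝 0] fun t : ℝ => t ^ k := by
      refine h.trans_isBigO ?_
      exact (isLittleO_pow_pow (Nat.lt_succ_self k)).isBigO
    have ih := ih hk
    intro j hj
    rcases Nat.lt_or_eq_of_le hj with hj | rfl
    · exact ih j (by omega)
    have h1 := aux_taylor (k := k + 1) hf
    have h2 := h.sub h1
    have h3 : (fun t : ℝ => (((k+1).factorial : ℝ)⁻¹ * iteratedDeriv (k+1) f 0) * t ^ (k+1))
        =o[𝓝 0] fun t : ℝ => t ^ (k + 1) := by
      refine h2.congr_left fun t => ?_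
      rw [Finset.sum_range_succ, Finset.sum_eq_zero]
      · ring
      · intro i hi
        rw [ih i (by simpa [Nat.lt_succ_iff] using hi), mul_zero]
    by_contra hne
    have hc : (((k+1).factorial : ℝ)⁻¹ * iteratedDeriv (k+1) f 0) ≠ 0 := by positivity
    rw [isLittleO_const_mul_left_iff hc] at h3
    have h4 := h3.mono (nhdsWithin_le_nhds (s := {(0:ℝ)}ᶜ))
    refine (isLittleO_irrefl ?_) h4
    refine Eventually.frequently ?_
    filter_upwards [self_mem_nhdsWithin] with t ht
    exact pow_ne_zero _ ht

lemma aux_mul_pow {g : ℝ → ℝ} (hg : ContDiffAt ℝ (⊤ : ℕ∞) g 0) (c : ℝ) (n m : ℕ) :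
    iteratedDeriv n (fun t => c * t ^ m * g t) 0
      = if m ≤ n then c * (n.choose m * m.factorial) * iteratedDeriv (n - m) g 0 else 0 := by
  have h1 : (fun t => c * t ^ m * g t) = fun t => c * (t ^ m * g t) := by
    ext; ring
  rw [h1, iteratedDeriv_const_mul_field, iteratedDeriv_fun_mul (by fun_prop)
    (hg.of_le (by exact_mod_cast le_top))]
  simp only [iteratedDeriv_fun_pow_zero]
  split_ifs with h
  · rw [Finset.sum_eq_single m]
    · simp; ring
    · intro b _ hb; simp [hb]
    · intro hb; simp at hb; omega
  · rw [Finset.sum_eq_zero, mul_zero]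
    intro b hb
    have : b ≠ m := by simp at hb; omega
    simp [this]

variable {X : Type*} [NormedAddCommGroup X] [NormedSpace ℝ X]

/-- the cuspidal curve -/
def cuspC (a b : X) (t : ℝ) : X := t ^ 3 • a - t ^ 2 • b

lemma cuspC_smooth (a b : X) : ContDiff ℝ (⊤ : ℕ∞) (cuspC a b) := by
  unfold cuspC; fun_prop

lemma cuspC_zero (a b : X) : cuspC a b 0 = 0 := by simp [cuspC]

lemma cuspC_comp {F : X → ℝ} (a b : X) (hF : ContDiffAt ℝ (⊤ : ℕ∞) F 0) :
    ContDiffAt ℝ (⊤ : ℕ∞) (fun t => F (cuspC a b t)) 0 := by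
  refine ContDiffAt.comp (0 : ℝ) ?_ (cuspC_smooth a b).contDiffAt
  rw [cuspC_zero]; exact hF

/-- jets along the cusp -/
def jt (a b : X) (F : X → ℝ) (n : ℕ) : ℝ := iteratedDeriv n (fun t => F (cuspC a b t)) 0

/-- directional derivative -/
def dd (a : X) (F : X → ℝ) (x : X) : ℝ := fderiv ℝ F x a

lemma dd_smooth {F : X → ℝ} (a : X) (hF : ContDiffAt ℝ (⊤ : ℕ∞) F 0) :
    ContDiffAt ℝ (⊤ : ℕ∞) (dd a F) 0 := by
  have := hF.fderiv_right (m := ((⊤ : ℕ∞) : WithTop ℕ∞)) (by norm_cast)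
  exact this.clm_apply contDiffAt_const

lemma jt_congr {F G : X → ℝ} (a b : X) (h : F =ᶠ[𝓝 0] G) (n : ℕ) : jt a b F n = jt a b G n := by
  apply Filter.EventuallyEq.iteratedDeriv_eq
  have h1 : Tendsto (cuspC a b) (𝓝 0) (𝓝 0) := by
    have := (cuspC_smooth a b).continuous.tendsto 0
    rwa [cuspC_zero] at this
  exact h1.eventually h

lemma jt_zero (a b : X) (F : X → ℝ) : jt a b F 0 = F 0 := by
  simp [jt, cuspC_zero]

lemma jt_succ {F : X → ℝ} (a b : X) (hF : ContDiffAt ℝ (⊤ : ℕ∞) F 0) (n : ℕ) :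
    jt a b F (n + 1) = (if 2 ≤ n then 3 * (n.choose 2 * 2) * jt a b (dd a F) (n - 2) else 0)
      - (if 1 ≤ n then 2 * n * jt a b (dd b F) (n - 1) else 0) := by
  have h1 : Tendsto (cuspC a b) (𝓝 0) (𝓝 0) := by
    have := (cuspC_smooth a b).continuous.tendsto 0
    rwa [cuspC_zero] at this
  have hd : ∀ᶠ x in 𝓝 (0 : X), DifferentiableAt ℝ F x := by
    have := (hF.of_le (m := 1) (by exact_mod_cast le_top)).eventually (by simp)
    filter_upwards [this] with x hx
    exact hx.differentiableAt (by simp)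
  have hder : deriv (fun t => F (cuspC a b t)) =ᶠ[𝓝 0] fun t =>
      3 * t ^ 2 * dd a F (cuspC a b t) - 2 * t ^ 1 * dd b F (cuspC a b t) := by
    filter_upwards [h1.eventually hd] with t ht
    have hc : HasDerivAt (cuspC a b) ((3 * t ^ 2) • a - (2 * t) • b) t := by
      have e1 := ((hasDerivAt_pow 3 t).smul_const a).sub ((hasDerivAt_pow 2 t).smul_const b)
      refine e1.congr_deriv ?_
      norm_num
    have := ht.hasFDerivAt.comp_hasDerivAt t hc
    have := this.deriv
    simp only [Function.comp_def] at this
    rw [this]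
    simp [dd]
  rw [jt, iteratedDeriv_succ', hder.iteratedDeriv_eq]
  have ha := cuspC_comp a b (dd_smooth a hF)
  have hb := cuspC_comp a b (dd_smooth b hF)
  rw [iteratedDeriv_fun_sub, aux_mul_pow ha, aux_mul_pow hb]
  · simp [jt]
  · refine ContDiffAt.mul (by fun_prop) (ha.of_le (by exact_mod_cast le_top))
  · refine ContDiffAt.mul (by fun_prop) (hb.of_le (by exact_mod_cast le_top))

lemma dd_symm {F : X → ℝ} (a b : X) {x : X} (hF : ContDiffAt ℝ 2 F x) :
    dd a (dd b F) x = dd b (dd a F) x := by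
  have hs := hF.isSymmSndFDerivAt (by simp)
  have hdf : DifferentiableAt ℝ (fderiv ℝ F) x :=
    (hF.fderiv_right (m := 1) (by norm_num)).differentiableAt (by simp)
  have key : ∀ c d : X, dd c (dd d F) x = fderiv ℝ (fderiv ℝ F) x c d := by
    intro c d
    have : HasFDerivAt (dd d F) _ x := hdf.hasFDerivAt.clm_apply (hasFDerivAt_const d x)
    rw [dd, this.fderiv]
    simp
  rw [key, key]
  exact hs a b

lemma jt_one {F : X → ℝ} (a b : X) (hF : ContDiffAt ℝ (⊤ : ℕ∞) F 0) : jt a b F 1 = 0 := by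
  rw [jt_succ a b hF]; simp

lemma jt_two {F : X → ℝ} (a b : X) (hF : ContDiffAt ℝ (⊤ : ℕ∞) F 0) :
    jt a b F 2 = - 2 * dd b F 0 := by
  rw [jt_succ a b hF]; simp [jt_zero]

lemma jt_three {F : X → ℝ} (a b : X) (hF : ContDiffAt ℝ (⊤ : ℕ∞) F 0) :
    jt a b F 3 = 6 * dd a F 0 := by
  rw [jt_succ a b hF]; simp [jt_zero, jt_one a b (dd_smooth b hF)]; norm_num

lemma key_lemma {P Q : X → ℝ} (a b : X) (κ : ℝ) (hP : ContDiffAt ℝ (⊤ : ℕ∞) P 0)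
    (hQ : ContDiffAt ℝ (⊤ : ℕ∞) Q 0) (hcl : dd b P =ᶠ[𝓝 0] dd a Q)
    (h1 : (fun t => P (cuspC a b t) - κ * t ^ 6) =o[𝓝 0] fun t : ℝ => t ^ 7)
    (h2 : (fun t => Q (cuspC a b t)) =o[𝓝 0] fun t : ℝ => t ^ 7) :
    dd a (dd a P) 0 = 2 * κ := by
  have hsm := fun {F : X → ℝ} (c : X) (hF : ContDiffAt ℝ (⊤ : ℕ∞) F 0) => dd_smooth c hF
  have hQ7 : jt a b Q 7 = 0 := aux_deriv_of_little (cuspC_comp a b hQ) h2 7 le_rfl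
  have hP6 : jt a b P 6 = κ * 720 := by
    have e := aux_deriv_of_little ((cuspC_comp a b hP).sub (by fun_prop)) h1 6 (by norm_num)
    rw [iteratedDeriv_fun_sub ((cuspC_comp a b hP).of_le (aux_le 6))
      (by fun_prop), iteratedDeriv_const_mul_field, iteratedDeriv_fun_pow_zero] at e
    simp [Nat.factorial] at e
    rw [jt]; linarith
  have hsym : dd b (dd a Q) =ᶠ[𝓝 0] dd a (dd b Q) := by
    have := (hQ.of_le (m := 2) (aux_le 2)).eventually (by simp)
    filter_upwards [this] with x hx
    exact dd_symm b a hx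
  have hsym2 : dd b (dd a (dd b Q)) 0 = dd a (dd b (dd b Q)) 0 :=
    dd_symm b a ((hsm b hQ).of_le (aux_le 2))
  have j2 := fun (F : X → ℝ) (hF : ContDiffAt ℝ (⊤ : ℕ∞) F 0) => jt_two a b hF
  have j1 := fun (F : X → ℝ) (hF : ContDiffAt ℝ (⊤ : ℕ∞) F 0) => jt_one a b hF
  have j3 := fun (F : X → ℝ) (hF : ContDiffAt ℝ (⊤ : ℕ∞) F 0) => jt_three a b hF
  have j4 : ∀ F : X → ℝ, ContDiffAt ℝ (⊤ : ℕ∞) F 0 → jt a b F 4 = 12 * dd b (dd b F) 0 := by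
    intro F hF; rw [jt_succ a b hF]
    simp [j1 _ (hsm a hF), j2 _ (hsm b hF)]; ring
  have eP := jt_succ a b hP 5
  have eQ := jt_succ a b hQ 6
  have eQb := jt_succ a b (hsm b hQ) 4
  simp [Nat.choose] at eP eQ eQb
  rw [jt_congr a b hcl] at eP
  have e4 := jt_congr a b hsym 2
  rw [j2 _ (hsm b (hsm a hQ)), j2 _ (hsm a (hsm b hQ))] at e4
  rw [j2 _ (hsm a (hsm b hQ)), j3 _ (hsm b (hsm b hQ))] at eQb
  rw [j4 _ (hsm a hQ), hQ7] at eQ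
  rw [j4 _ (hsm a hQ), hP6, j3 _ (hsm a hP)] at eP
  rw [eQb] at eQ
  linarith

end analysis

section symp

def ip {n : ℕ} (i : Fin n) : Fin (2 * n) := ⟨2 * i.val, by have := i.isLt; omega⟩
def iq {n : ℕ} (i : Fin n) : Fin (2 * n) := ⟨2 * i.val + 1, by have := i.isLt; omega⟩

lemma ip_val {n : ℕ} (i : Fin n) : (ip i).val = 2 * i.val := rfl
lemma iq_val {n : ℕ} (i : Fin n) : (iq i).val = 2 * i.val + 1 := rfl

lemma ip_inj {n : ℕ} {i k : Fin n} : ip i = ip k ↔ i = k := by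
  simp [ip, Fin.ext_iff]
lemma iq_inj {n : ℕ} {i k : Fin n} : iq i = iq k ↔ i = k := by
  simp [iq, Fin.ext_iff]
lemma ip_ne_iq {n : ℕ} (i k : Fin n) : ip i ≠ iq k := by
  simp only [ip, iq, ne_eq, Fin.ext_iff]; omega
lemma iq_ne_ip {n : ℕ} (i k : Fin n) : iq i ≠ ip k := (ip_ne_iq k i).symm

lemma idx_cases {n : ℕ} (j : Fin (2 * n)) : (∃ i : Fin n, j = ip i) ∨ ∃ i : Fin n, j = iq i := by
  have hj := j.isLt
  rcases Nat.mod_two_eq_zero_or_one j.val with h | h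
  · exact Or.inl ⟨⟨j.val / 2, by omega⟩, by simp only [ip, Fin.ext_iff]; omega⟩
  · exact Or.inr ⟨⟨j.val / 2, by omega⟩, by simp only [iq, Fin.ext_iff]; omega⟩

lemma stdSymp_eq {n : ℕ} (u v : Fin (2 * n) → ℝ) :
    stdSymp n u v = ∑ i : Fin n, (u (ip i) * v (iq i) - u (iq i) * v (ip i)) := rfl

lemma symp_add_left {n : ℕ} (u u' v : Fin (2 * n) → ℝ) :
    stdSymp n (u + u') v = stdSymp n u v + stdSymp n u' v := by
  simp only [stdSymp_eq, ← Finset.sum_add_distrib, Pi.add_apply]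
  exact Finset.sum_congr rfl fun i _ => by ring

lemma symp_add_right {n : ℕ} (u v v' : Fin (2 * n) → ℝ) :
    stdSymp n u (v + v') = stdSymp n u v + stdSymp n u v' := by
  simp only [stdSymp_eq, ← Finset.sum_add_distrib, Pi.add_apply]
  exact Finset.sum_congr rfl fun i _ => by ring

lemma symp_swap {n : ℕ} (u v : Fin (2 * n) → ℝ) :
    stdSymp n u v = - stdSymp n v u := by
  simp only [stdSymp_eq, ← Finset.sum_neg_distrib]
  exact Finset.sum_congr rfl fun i _ => by ring

def Jm (n : ℕ) : (Fin (2 * n) → ℝ) →ₗ[ℝ] (Fin (2 * n) → ℝ) where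
  toFun u j := if h : j.val % 2 = 0 then - u ⟨j.val + 1, by have := j.isLt; omega⟩
    else u ⟨j.val - 1, by have := j.isLt; omega⟩
  map_add' u v := by
    ext j
    simp only [Pi.add_apply]
    split_ifs <;> ring
  map_smul' c u := by
    ext j
    simp only [Pi.smul_apply, smul_eq_mul, RingHom.id_apply]
    split_ifs <;> ring

lemma Jm_p {n : ℕ} (u : Fin (2 * n) → ℝ) (i : Fin n) : Jm n u (ip i) = - u (iq i) := by
  simp [Jm, ip, iq]
lemma Jm_q {n : ℕ} (u : Fin (2 * n) → ℝ) (i : Fin n) : Jm n u (iq i) = u (ip i) := by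
  simp [Jm, ip, iq, Nat.add_mod]

lemma symp_JJ {n : ℕ} (u v : Fin (2 * n) → ℝ) :
    stdSymp n (Jm n u) (Jm n v) = stdSymp n u v := by
  simp only [stdSymp_eq, Jm_p, Jm_q]
  exact Finset.sum_congr rfl fun i _ => by ring

lemma symp_J_self {n : ℕ} (u : Fin (2 * n) → ℝ) (h : stdSymp n u (Jm n u) = 0) : u = 0 := by
  simp only [stdSymp_eq, Jm_p, Jm_q] at h
  rw [Finset.sum_eq_zero_iff_of_nonneg (fun i _ => by nlinarith [sq_nonneg (u (ip i)), sq_nonneg (u (iq i))])] at h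
  ext j
  rcases idx_cases j with ⟨i, rfl⟩ | ⟨i, rfl⟩
  · have := h i (Finset.mem_univ _)
    simp only [Pi.zero_apply]
    nlinarith [sq_nonneg (u (ip i)), sq_nonneg (u (iq i))]
  · have := h i (Finset.mem_univ _)
    simp only [Pi.zero_apply]
    nlinarith [sq_nonneg (u (ip i)), sq_nonneg (u (iq i))]

def ep {n : ℕ} (i : Fin n) : Fin (2 * n) → ℝ := Pi.single (ip i) 1
def evq {n : ℕ} (i : Fin n) : Fin (2 * n) → ℝ := Pi.single (iq i) 1

lemma ep_p {n : ℕ} (i k : Fin n) : ep i (ip k) = if k = i then 1 else 0 := by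
  simp [ep, Pi.single_apply, ip_inj]
lemma ep_q {n : ℕ} (i k : Fin n) : ep i (iq k) = 0 := by
  simp [ep, Pi.single_apply, iq_ne_ip]
lemma evq_p {n : ℕ} (i k : Fin n) : evq i (ip k) = 0 := by
  simp [evq, Pi.single_apply, ip_ne_iq]
lemma evq_q {n : ℕ} (i k : Fin n) : evq i (iq k) = if k = i then 1 else 0 := by
  simp [evq, Pi.single_apply, iq_inj]

lemma Jm_ep {n : ℕ} (i : Fin n) : Jm n (ep i) = evq i := by
  ext j
  rcases idx_cases j with ⟨k, rfl⟩ | ⟨k, rfl⟩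
  · rw [Jm_p, ep_q, evq_p, neg_zero]
  · rw [Jm_q, ep_p, evq_q]

lemma symp_ep {n : ℕ} (i : Fin n) (x : Fin (2 * n) → ℝ) : stdSymp n (ep i) x = x (iq i) := by
  simp [stdSymp_eq, ep_p, ep_q]

/-- right inverse with values in `J W`. -/
lemma exists_R {n : ℕ} (A : (Fin (2 * n) → ℝ) →L[ℝ] (Fin n → ℝ))
    (hiso : ∀ u v, A u = 0 → A v = 0 → stdSymp n u v = 0) :
    ∃ R : (Fin n → ℝ) →L[ℝ] (Fin (2 * n) → ℝ), (∀ y, A (R y) = y) ∧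
      (∀ y, ∃ w, A w = 0 ∧ R y = Jm n w) ∧ (∀ w, A w = 0 → R (A (Jm n w)) = Jm n w) := by
  let W : Submodule ℝ (Fin (2 * n) → ℝ) := LinearMap.ker (A : (Fin (2 * n) → ℝ) →ₗ[ℝ] (Fin n → ℝ))
  let T : W →ₗ[ℝ] (Fin n → ℝ) := (A : (Fin (2 * n) → ℝ) →ₗ[ℝ] (Fin n → ℝ)) ∘ₗ Jm n ∘ₗ W.subtype
  have hT : Function.Injective T := by
    rw [injective_iff_map_eq_zero]
    rintro ⟨w, hw⟩ h
    have hw' : A w = 0 := hw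
    have h' : A (Jm n w) = 0 := h
    have := symp_J_self w (hiso _ _ hw' h')
    simpa using this
  have hr := LinearMap.finrank_range_add_finrank_ker (A : (Fin (2 * n) → ℝ) →ₗ[ℝ] (Fin n → ℝ))
  have hle : Module.finrank ℝ (LinearMap.range (A : (Fin (2 * n) → ℝ) →ₗ[ℝ] (Fin n → ℝ))) ≤ n := by
    simpa using Submodule.finrank_le (LinearMap.range (A : (Fin (2 * n) → ℝ) →ₗ[ℝ] (Fin n → ℝ)))
  have hW : Module.finrank ℝ W = n := by
    have h1 := LinearMap.finrank_le_finrank_of_injective hT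
    simp at h1 hr
    change _ + Module.finrank ℝ W = _ at hr
    omega
  let e := LinearEquiv.ofInjectiveOfFinrankEq T hT (by simp [hW])
  have he : ∀ w, e w = T w := fun w => rfl
  let R : (Fin n → ℝ) →ₗ[ℝ] (Fin (2 * n) → ℝ) := Jm n ∘ₗ W.subtype ∘ₗ e.symm.toLinearMap
  refine ⟨LinearMap.toContinuousLinearMap R, ?_, ?_, ?_⟩
  · intro y
    change T (e.symm y) = y
    rw [← he]; simp
  · intro y
    exact ⟨e.symm y, (e.symm y).2, rfl⟩
  · intro w hw
    have : e.symm (A (Jm n w)) = (⟨w, hw⟩ : W) := by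
      rw [LinearEquiv.symm_apply_eq]; rfl
    change Jm n ((e.symm (A (Jm n w)) : W) : Fin (2 * n) → ℝ) = _
    rw [this]

open Filter Topology Asymptotics

lemma exists_param {n : ℕ} (L : LagrangianGerm n) :
    ∃ Ψ : (Fin (2 * n) → ℝ) → (Fin (2 * n) → ℝ), ContDiffAt ℝ (⊤ : ℕ∞) Ψ 0 ∧
      (∀ᶠ y in 𝓝 0, (∀ i, fderiv ℝ (L.H i) 0 y = 0) →
        ∀ a b : Fin (2 * n) → ℝ, (∀ i, fderiv ℝ (L.H i) 0 a = 0) → (∀ i, fderiv ℝ (L.H i) 0 b = 0) →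
          stdSymp n a (fderiv ℝ Ψ y b) = stdSymp n b (fderiv ℝ Ψ y a)) ∧
      (∀ B c : ℝ → Fin (2 * n) → ℝ, Tendsto B (𝓝 0) (𝓝 0) → Tendsto c (𝓝 0) (𝓝 0) →
        (∀ i, (fun t => L.H i (B t)) =o[𝓝 0] fun t : ℝ => t ^ 7) →
        (∀ t i, fderiv ℝ (L.H i) 0 (c t) = 0) →
        (∀ t, ∃ w, (∀ i, fderiv ℝ (L.H i) 0 w = 0) ∧ B t = c t + Jm n w) →
        (fun t => B t - Ψ (c t)) =o[𝓝 0] fun t : ℝ => t ^ 7) := by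
  obtain ⟨U, hUo, hU0, hU⟩ := L.lagrangian
  let Hv : (Fin (2 * n) → ℝ) → (Fin n → ℝ) := fun x i => L.H i x
  have hHs : ContDiff ℝ (⊤ : ℕ∞) Hv := contDiff_pi.2 L.smooth
  have hHd : Differentiable ℝ Hv := hHs.differentiable (by simp)
  have hfd : ∀ x v i, fderiv ℝ (L.H i) x v = fderiv ℝ Hv x v i := by
    intro x v i
    have := hasFDerivAt_pi'.1 (hHd x).hasFDerivAt i
    have e : fderiv ℝ (L.H i) x = _ := this.fderiv
    rw [e]; rfl
  have hz : ∀ x v, (∀ i, fderiv ℝ (L.H i) x v = 0) ↔ fderiv ℝ Hv x v = 0 := by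
    intro x v
    simp only [hfd, funext_iff, Pi.zero_apply]
  have hH0 : Hv 0 = 0 := funext L.zero_at_zero
  have hU' : ∀ x ∈ U, Hv x = 0 → ∀ u v, fderiv ℝ Hv x u = 0 → fderiv ℝ Hv x v = 0 →
      stdSymp n u v = 0 := by
    intro x hx h0 u v hu hv
    exact (hU x hx (fun i => congrFun h0 i)).2 u v ((hz x u).2 hu) ((hz x v).2 hv)
  simp only [hz]
  set A := fderiv ℝ Hv 0 with hA
  have hiso := hU' 0 hU0 hH0
  obtain ⟨R, hAR, hRJ, hRA⟩ := exists_R A hiso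
  let Φ : (Fin (2 * n) → ℝ) → (Fin (2 * n) → ℝ) := fun x => x + R (Hv x - A x)
  have hΦs : ContDiff ℝ (⊤ : ℕ∞) Φ := by
    refine contDiff_id.add (R.contDiff.comp (hHs.sub A.contDiff))
  have hΦd : ∀ x, HasFDerivAt Φ (ContinuousLinearMap.id ℝ _ + R.comp (fderiv ℝ Hv x - A)) x := by
    intro x
    exact (hasFDerivAt_id x).add (R.hasFDerivAt.comp x ((hHd x).hasFDerivAt.sub A.hasFDerivAt))
  have hΦ0 : Φ 0 = 0 := by simp [Φ, hH0]
  have hd0 : HasFDerivAt Φ ((ContinuousLinearEquiv.refl ℝ (Fin (2 * n) → ℝ) :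
      (Fin (2 * n) → ℝ) ≃L[ℝ] (Fin (2 * n) → ℝ)) : (Fin (2 * n) → ℝ) →L[ℝ] (Fin (2 * n) → ℝ)) 0 := by
    convert hΦd 0 using 1
    ext; simp [← hA]
  have hst := hΦs.contDiffAt.hasStrictFDerivAt' hd0 (by simp)
  let Ψ := hst.localInverse Φ _ 0
  have hΨs : ContDiffAt ℝ (⊤ : ℕ∞) Ψ 0 := by
    have := hΦs.contDiffAt.to_localInverse hd0 (by simp)
    rwa [hΦ0] at this
  have hΨ0 : Ψ 0 = 0 := by
    have := hst.localInverse_apply_image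
    rwa [hΦ0] at this
  have hr : ∀ᶠ y in 𝓝 0, Φ (Ψ y) = y := by
    have := hst.eventually_right_inverse
    rwa [hΦ0] at this
  have hl : ∀ᶠ x in 𝓝 0, Ψ (Φ x) = x := hst.eventually_left_inverse
  refine ⟨Ψ, hΨs, ?_, ?_⟩
  · have hUe : ∀ᶠ y in 𝓝 0, Ψ y ∈ U := by
      have := hΨs.continuousAt.tendsto
      rw [hΨ0] at this
      exact this (hUo.mem_nhds hU0)
    have hde : ∀ᶠ y in 𝓝 0, DifferentiableAt ℝ Ψ y := by
      have := (hΨs.of_le (aux_le 1)).eventually (by simp)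
      filter_upwards [this] with x hx
      exact hx.differentiableAt (by simp)
    filter_upwards [hr.eventually_nhds, hUe, hde] with y hy hyU hyd hyW a b ha hb
    have hHy : Hv (Ψ y) = 0 := by
      have h := congrArg A hy.self_of_nhds
      simp only [Φ, map_add, hAR, hyW] at h
      simpa using h
    have hcomp : ∀ v, fderiv ℝ Ψ y v + R (fderiv ℝ Hv (Ψ y) (fderiv ℝ Ψ y v) - A (fderiv ℝ Ψ y v)) = v := by
      intro v
      have h1 := (hΦd (Ψ y)).comp y hyd.hasFDerivAt
      have h2 : HasFDerivAt (Φ ∘ Ψ) (ContinuousLinearMap.id ℝ _) y :=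
        (hasFDerivAt_id y).congr_of_eventuallyEq hy
      have := congrArg (fun M => M v) (h1.unique h2)
      simpa using this
    have hk : ∀ v, A v = 0 → fderiv ℝ Hv (Ψ y) (fderiv ℝ Ψ y v) = 0 ∧
        ∃ w, A w = 0 ∧ fderiv ℝ Ψ y v = v + Jm n w := by
      intro v hv
      have h0 := hcomp v
      have h1 := congrArg A h0
      simp only [map_add, hAR, hv] at h1
      have h2 : fderiv ℝ Hv (Ψ y) (fderiv ℝ Ψ y v) = 0 := by simpa using h1
      refine ⟨h2, ?_⟩
      rw [h2] at h0
      obtain ⟨w, hw, hw'⟩ := hRJ (A (fderiv ℝ Ψ y v))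
      refine ⟨w, hw, ?_⟩
      rw [← hw']
      nth_rw 2 [← h0]
      simp
    obtain ⟨ha1, wa, hwa, hva⟩ := hk a ha
    obtain ⟨hb1, wb, hwb, hvb⟩ := hk b hb
    have h := hU' _ hyU hHy _ _ ha1 hb1
    rw [hva, hvb] at h ⊢
    simp only [symp_add_left, symp_add_right, symp_JJ, hiso _ _ ha hb, hiso _ _ hb ha,
      hiso _ _ hwa hwb] at h ⊢
    have := symp_swap (Jm n wa) b
    linarith
  · intro B c hB hc hH hcW hBc
    have hHo : (fun t => Hv (B t)) =o[𝓝 0] fun t : ℝ => t ^ 7 := isLittleO_pi.2 hH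
    have hΦB : ∀ t, Φ (B t) = c t + R (Hv (B t)) := by
      intro t
      obtain ⟨w, hw, hw'⟩ := hBc t
      have : R (A (B t)) = Jm n w := by
        rw [hw', map_add, hcW, zero_add, hRA w hw]
      simp only [Φ, map_sub, this]
      nth_rw 1 [hw']
      abel
    have hBe : ∀ᶠ t in 𝓝 0, Ψ (Φ (B t)) = B t := hB.eventually hl
    have hT : Tendsto (fun t => (Φ (B t), c t)) (𝓝 0) (𝓝 (0, 0)) := by
      refine Tendsto.prodMk_nhds ?_ hc
      have := hΦs.continuous.tendsto 0
      rw [hΦ0] at this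
      exact this.comp hB
    have hO := (hΨs.hasStrictFDerivAt (by simp)).isBigO_sub.comp_tendsto hT
    have hO2 : (fun t => Ψ (Φ (B t)) - Ψ (c t)) =o[𝓝 0] fun t : ℝ => t ^ 7 := by
      refine hO.trans_isLittleO ?_
      have h1 := (R.isBigO_comp (fun t => Hv (B t)) (𝓝 (0:ℝ))).trans_isLittleO hHo
      refine h1.congr_left fun t => ?_
      simp [hΦB]
    refine hO2.congr' ?_ EventuallyEq.rfl
    filter_upwards [hBe] with t ht
    rw [ht]

end symp

section final
open Filter Topology Asymptotics

lemma no_lag {n : ℕ} (L : LagrangianGerm n) (i0 i1 i2 : Fin n) (h01 : i0 ≠ i1) (h02 : i0 ≠ i2)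
    (h1 : ∀ i, (fun t => L.H i (cuspC (ep i0) (ep i2) t + (-(1 / 3) * t ^ 6) • evq i0))
      =o[𝓝 0] fun t : ℝ => t ^ 7)
    (h2 : ∀ i, (fun t => L.H i (cuspC (ep i0) (ep i1) t)) =o[𝓝 0] fun t : ℝ => t ^ 7) : False := by
  obtain ⟨Ψ, hΨs, hcl, hcurve⟩ := exists_param L
  have hc0 : ∀ a b : Fin (2 * n) → ℝ, Tendsto (cuspC a b) (𝓝 0) (𝓝 0) := by
    intro a b
    have := (cuspC_smooth a b).continuous.tendsto 0
    rwa [cuspC_zero] at this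
  have hB0 : Tendsto (fun t : ℝ => cuspC (ep i0) (ep i2) t + (-(1 / 3) * t ^ 6) • evq i0)
      (𝓝 0) (𝓝 0) := by
    have : Continuous (fun t : ℝ => cuspC (ep i0) (ep i2) t + (-(1 / 3) * t ^ 6) • evq i0) :=
      (cuspC_smooth _ _).continuous.add (by fun_prop)
    have := this.tendsto 0
    simpa [cuspC_zero] using this
  -- tangent vectors
  have hjet : ∀ i (a b : Fin (2 * n) → ℝ),
      (fun t => L.H i (cuspC a b t)) =o[𝓝 0] (fun t : ℝ => t ^ 3) →
      fderiv ℝ (L.H i) 0 a = 0 ∧ fderiv ℝ (L.H i) 0 b = 0 := by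
    intro i a b h
    have hs : ContDiffAt ℝ (⊤ : ℕ∞) (L.H i) 0 := (L.smooth i).contDiffAt
    have e := aux_deriv_of_little (cuspC_comp a b hs) h
    have e2 := jt_two a b hs
    have e3 := jt_three a b hs
    rw [jt, e 2 (by norm_num)] at e2
    rw [jt, e 3 le_rfl] at e3
    simp only [dd] at e2 e3
    constructor <;> linarith
  have h73 : (fun t : ℝ => t ^ 7) =O[𝓝 0] fun t : ℝ => t ^ 3 :=
    (isLittleO_pow_pow (by norm_num)).isBigO
  have hA : ∀ i, fderiv ℝ (L.H i) 0 (ep i0) = 0 ∧ fderiv ℝ (L.H i) 0 (ep i1) = 0 := fun i =>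
    hjet i _ _ ((h2 i).trans_isBigO h73)
  have hA2 : ∀ i, fderiv ℝ (L.H i) 0 (ep i2) = 0 := by
    intro i
    refine (hjet i (ep i0) (ep i2) ?_).2
    have hT := (hB0.prodMk_nhds (hc0 (ep i0) (ep i2)))
    have hO := ((L.smooth i).contDiffAt.hasStrictFDerivAt (x := 0) (by simp)).isBigO_sub.comp_tendsto hT
    have hO2 : (fun t => L.H i (cuspC (ep i0) (ep i2) t + (-(1 / 3) * t ^ 6) • evq i0)
        - L.H i (cuspC (ep i0) (ep i2) t)) =o[𝓝 0] fun t : ℝ => t ^ 3 := by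
      refine hO.trans_isLittleO ?_
      have : (fun t : ℝ => t ^ 6) =o[𝓝 0] fun t : ℝ => t ^ 3 := isLittleO_pow_pow (by norm_num)
      have h6 : (fun t : ℝ => (-(1 / 3) * t ^ 6) • (evq i0 : Fin (2 * n) → ℝ)) =O[𝓝 0]
          fun t : ℝ => t ^ 6 := by
        have e1 : (fun t : ℝ => -(1 / 3) * t ^ 6) =O[𝓝 0] fun t : ℝ => t ^ 6 :=
          (isBigO_refl _ _).const_mul_left _
        have e2 := e1.smul (isBigO_refl (fun _ : ℝ => (evq i0 : Fin (2 * n) → ℝ)) (𝓝 0))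
        refine e2.trans ?_
        refine IsBigO.of_bound ‖(evq i0 : Fin (2 * n) → ℝ)‖ (Eventually.of_forall fun t => ?_)
        rw [norm_smul, mul_comm]
      refine (h6.trans_isLittleO this).congr_left fun t => ?_
      simp
    refine (((h1 i).trans_isBigO h73).sub hO2).congr_left fun t => ?_
    ring
  -- the tangent space
  let W : Submodule ℝ (Fin (2 * n) → ℝ) :=
    { carrier := {v | ∀ i, fderiv ℝ (L.H i) 0 v = 0}
      add_mem' := fun {u v} hu hv i => by rw [map_add, hu i, hv i, add_zero]
      zero_mem' := fun i => map_zero _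
      smul_mem' := fun c v hv i => by rw [map_smul, hv i, smul_zero] }
  have hmem : ∀ v, v ∈ W ↔ ∀ i, fderiv ℝ (L.H i) 0 v = 0 := fun v => Iff.rfl
  let a : W := ⟨ep i0, fun i => (hA i).1⟩
  have hcoord : ∀ k : Fin n, ContDiffAt ℝ (⊤ : ℕ∞) (fun x : W => Ψ x (iq k)) 0 := by
    intro k
    have e1 : ContDiffAt ℝ (⊤ : ℕ∞) (fun x : W => Ψ x) 0 :=
      ContDiffAt.comp (0 : W) (g := Ψ) (by simpa using hΨs) W.subtypeL.contDiff.contDiffAt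
    exact contDiffAt_pi.1 e1 (iq k)
  have hdΨ : ∀ᶠ x : W in 𝓝 0, ∀ (k : Fin n) (b : W),
      dd b (fun x : W => Ψ x (iq k)) x = fderiv ℝ Ψ x b (iq k) := by
    have hde : ∀ᶠ y in 𝓝 0, DifferentiableAt ℝ Ψ y := by
      have := (hΨs.of_le (aux_le 1)).eventually (by simp)
      filter_upwards [this] with x hx
      exact hx.differentiableAt (by simp)
    have ht : Tendsto (fun x : W => (x : Fin (2 * n) → ℝ)) (𝓝 0) (𝓝 0) := by
      simpa using (W.subtypeL.continuous.tendsto 0)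
    filter_upwards [ht.eventually hde] with x hx k b
    have e1 : HasFDerivAt (fun x : W => Ψ x) ((fderiv ℝ Ψ x).comp W.subtypeL) x :=
      HasFDerivAt.comp x hx.hasFDerivAt W.subtypeL.hasFDerivAt
    have e2 := hasFDerivAt_pi'.1 e1 (iq k)
    rw [dd, e2.fderiv]
    rfl
  have hclosed : ∀ (k : Fin n) (hk : ep k ∈ W),
      dd (⟨ep k, hk⟩ : W) (fun x : W => Ψ x (iq i0)) =ᶠ[𝓝 0] dd a (fun x : W => Ψ x (iq k)) := by
    intro k hk
    have ht : Tendsto (fun x : W => (x : Fin (2 * n) → ℝ)) (𝓝 0) (𝓝 0) := by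
      simpa using (W.subtypeL.continuous.tendsto 0)
    filter_upwards [hdΨ, ht.eventually hcl] with x hx hc
    rw [hx, hx]
    have := hc x.2 (ep i0) (ep k) a.2 hk
    rwa [symp_ep, symp_ep] at this
  have hcusp : ∀ (b : W) t, ((cuspC a b t : W) : Fin (2 * n) → ℝ) = cuspC (ep i0) b t := by
    intro b t; simp [cuspC, a]
  have hcq : ∀ (k l : Fin n) t, cuspC (ep i0) (ep k) t (iq l) = 0 := by
    intro k l t; simp [cuspC, ep_q]
  -- first branch
  let b2 : W := ⟨ep i2, hA2⟩
  let b1 : W := ⟨ep i1, fun i => (hA i).2⟩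
  have r1 := hcurve _ (cuspC (ep i0) (ep i2)) hB0 (hc0 _ _) h1
    (fun t => by rw [← hcusp b2 t]; exact (cuspC a b2 t).2)
    (fun t => ⟨(-(1 / 3) * t ^ 6) • ep i0, (W.smul_mem _ a.2), by rw [map_smul, Jm_ep]⟩)
  have r2 := hcurve _ (cuspC (ep i0) (ep i1)) (hc0 _ _) (hc0 _ _) h2
    (fun t => by rw [← hcusp b1 t]; exact (cuspC a b1 t).2)
    (fun t => ⟨0, W.zero_mem, by simp⟩)
  have k1 := key_lemma a b2 (-(1 / 3)) (hcoord i0) (hcoord i2) (hclosed i2 b2.2)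
    (by
      refine (isLittleO_pi.1 r1 (iq i0)).neg_left.congr_left fun t => ?_
      simp only [hcusp, Pi.sub_apply, Pi.add_apply, Pi.smul_apply, hcq, evq_q]
      simp [b2])
    (by
      refine (isLittleO_pi.1 r1 (iq i2)).neg_left.congr_left fun t => ?_
      simp only [hcusp, Pi.sub_apply, Pi.add_apply, Pi.smul_apply, hcq, evq_q]
      simp [b2, h02.symm])
  have k2 := key_lemma a b1 0 (hcoord i0) (hcoord i1) (hclosed i1 b1.2)
    (by
      refine (isLittleO_pi.1 r2 (iq i0)).neg_left.congr_left fun t => ?_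
      simp only [hcusp, Pi.sub_apply, hcq]
      simp [b1])
    (by
      refine (isLittleO_pi.1 r2 (iq i1)).neg_left.congr_left fun t => ?_
      simp only [hcusp, Pi.sub_apply, hcq]
      simp [b1])
  rw [k1] at k2
  norm_num at k2

/-- the explicit Lagrangian germs -/
def gradS {n : ℕ} (i0 i2 : Fin n) (a b : ℝ) (i : Fin n) (x : Fin (2 * n) → ℝ) : ℝ :=
  (if i = i0 then 1 else 0) * (a * x (ip i2) ^ 3 + b * x (ip i0) ^ 2)
    + (if i = i2 then 1 else 0) * (3 * a * (x (ip i0) * x (ip i2) ^ 2))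

def gradSd {n : ℕ} (i0 i2 : Fin n) (a b : ℝ) (i : Fin n) (x u : Fin (2 * n) → ℝ) : ℝ :=
  (if i = i0 then 1 else 0) * (3 * a * x (ip i2) ^ 2 * u (ip i2) + 2 * b * x (ip i0) * u (ip i0))
    + (if i = i2 then 1 else 0) * (3 * a * (u (ip i0) * x (ip i2) ^ 2
      + 2 * x (ip i0) * x (ip i2) * u (ip i2)))

lemma gradS_fderiv {n : ℕ} (i0 i2 : Fin n) (a b : ℝ) (i : Fin n) (x u : Fin (2 * n) → ℝ) :
    fderiv ℝ (fun x : Fin (2 * n) → ℝ => x (iq i) - gradS i0 i2 a b i x) x u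
      = u (iq i) - gradSd i0 i2 a b i x u := by
  have hp : ∀ j : Fin (2 * n), HasFDerivAt (fun x : Fin (2 * n) → ℝ => x j)
      (ContinuousLinearMap.proj (R := ℝ) (φ := fun _ => ℝ) j) x := fun j => hasFDerivAt_apply j x
  have h := (hp (iq i)).sub
    ((((((hp (ip i2)).pow 3).const_mul a).add (((hp (ip i0)).pow 2).const_mul b)).const_mul
      (if i = i0 then (1:ℝ) else 0)).add
    ((((hp (ip i0)).mul ((hp (ip i2)).pow 2)).const_mul (3 * a)).const_mul
      (if i = i2 then (1:ℝ) else 0)))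
  have h' : HasFDerivAt (fun x : Fin (2 * n) → ℝ => x (iq i) - gradS i0 i2 a b i x) _ x := h
  rw [h'.fderiv]
  simp only [gradSd, sub_apply, add_apply,
    smul_apply, ContinuousLinearMap.proj_apply, smul_eq_mul, nsmul_eq_mul]
  push_cast
  ring

def lagG {n : ℕ} (i0 i2 : Fin n) (a b : ℝ) : LagrangianGerm n where
  H i x := x (iq i) - gradS i0 i2 a b i x
  smooth i := by unfold gradS; fun_prop
  zero_at_zero i := by simp [gradS]
  lagrangian := by
    refine ⟨Set.univ, isOpen_univ, trivial, fun x _ _ => ⟨?_, ?_⟩⟩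
    · rw [Fintype.linearIndependent_iff]
      intro g hg k
      have := congrArg (fun M => M (evq k)) hg
      simpa [gradS_fderiv, evq_q, gradSd, evq_p, eq_comm] using this
    · intro u v hu hv
      simp only [gradS_fderiv, sub_eq_zero] at hu hv
      simp only [stdSymp_eq, hu, hv]
      simp only [gradSd]
      have : ∀ i : Fin n, u (ip i) * ((if i = i0 then 1 else 0) * (3 * a * x (ip i2) ^ 2 * v (ip i2) + 2 * b * x (ip i0) * v (ip i0))
    + (if i = i2 then 1 else 0) * (3 * a * (v (ip i0) * x (ip i2) ^ 2
      + 2 * x (ip i0) * x (ip i2) * v (ip i2)))) - ((if i = i0 then 1 else 0) * (3 * a * x (ip i2) ^ 2 * u (ip i2) + 2 * b * x (ip i0) * u (ip i0))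
    + (if i = i2 then 1 else 0) * (3 * a * (u (ip i0) * x (ip i2) ^ 2
      + 2 * x (ip i0) * x (ip i2) * u (ip i2)))) * v (ip i)
        = (if i = i0 then 3 * a * x (ip i2) ^ 2 * (u (ip i0) * v (ip i2) - u (ip i2) * v (ip i0)) else 0)
         + (if i = i2 then 3 * a * x (ip i2) ^ 2 * (u (ip i2) * v (ip i0) - u (ip i0) * v (ip i2)) else 0) := by
        intro i
        split_ifs with e1 e2 e2
        · subst e1; subst e2; ring
        · subst e1; ring
        · subst e2; ring
        · ring
      rw [Finset.sum_congr rfl fun i _ => this i, Finset.sum_add_distrib]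
      simp
      ring

lemma vanish_zero {h : ℝ → ℝ} (hh : ∀ t, h t = 0) : vanishOrder h = ⊤ := by
  have : h = fun _ => 0 := funext hh
  subst this
  rw [vanishOrder, sInf_eq_top]
  rintro _ ⟨m, rfl, _, h3⟩
  exact absurd (by simp) h3

lemma vanish_pow (c : ℝ) : 7 ≤ vanishOrder (fun t => c * t ^ 7) := by
  refine le_sInf ?_
  rintro _ ⟨m, rfl, _, h3⟩
  rw [iteratedDeriv_const_mul_field, iteratedDeriv_fun_pow_zero] at h3
  by_cases hm : m = 7
  · subst hm; norm_num
  · simp [hm] at h3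

lemma little_of_vanish {h : ℝ → ℝ} (hs : ContDiffAt ℝ (⊤ : ℕ∞) h 0) (h0 : h 0 = 0)
    (hv : 7 < vanishOrder h) : h =o[𝓝 0] fun t : ℝ => t ^ 7 := by
  refine aux_little_of_deriv hs fun j hj => ?_
  rcases Nat.eq_zero_or_pos j with rfl | hp
  · simpa using h0
  by_contra hne
  have : vanishOrder h ≤ j := sInf_le ⟨j, rfl, hp, hne⟩
  have h7 : ((j : ℕ) : ℕ∞) ≤ 7 := by exact_mod_cast hj
  exact absurd hv (not_lt.2 (this.trans h7))

end final

/-- Lagrangian tangency orders for the class `(T₇)⁶`. -/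
theorem T7_6_lagrangian_tangency_orders
    (n : ℕ) (hn : 3 ≤ n)
    (B₁ B₂ : ℝ → Fin (2 * n) → ℝ)
    (hB₁ : B₁ = fun (t : ℝ) (j : Fin (2 * n)) => if (j : ℕ) = 0 then t ^ 3 else if (j : ℕ) = 1 then -(1 / 3) * t ^ 6 else if (j : ℕ) = 4 then -t ^ 2 else (0 : ℝ))
    (hB₂ : B₂ = fun (t : ℝ) (j : Fin (2 * n)) => if (j : ℕ) = 0 then t ^ 3 else if (j : ℕ) = 2 then -t ^ 2 else (0 : ℝ)) :
    Lt2 B₁ B₂ = 7 ∧ Lt1 B₁ = ⊤ ∧ Lt1 B₂ = ⊤ := by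
  obtain ⟨i0, hi0⟩ : ∃ i : Fin n, i.val = 0 := ⟨⟨0, by omega⟩, rfl⟩
  obtain ⟨i1, hi1⟩ : ∃ i : Fin n, i.val = 1 := ⟨⟨1, by omega⟩, rfl⟩
  obtain ⟨i2, hi2⟩ : ∃ i : Fin n, i.val = 2 := ⟨⟨2, by omega⟩, rfl⟩
  have h01 : i0 ≠ i1 := by intro h; rw [h] at hi0; omega
  have h02 : i0 ≠ i2 := by intro h; rw [h] at hi0; omega
  have h12 : i1 ≠ i2 := by intro h; rw [h] at hi1; omega
  have p0 : ∀ k : Fin n, (ip k).val = 0 ↔ k = i0 := fun k => by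
    rw [ip_val, Fin.ext_iff]; omega
  have p1 : ∀ k : Fin n, (ip k).val = 1 ↔ False := fun k =>
    ⟨fun h => by rw [ip_val] at h; omega, False.elim⟩
  have p2 : ∀ k : Fin n, (ip k).val = 2 ↔ k = i1 := fun k => by
    rw [ip_val, Fin.ext_iff]; omega
  have p4 : ∀ k : Fin n, (ip k).val = 4 ↔ k = i2 := fun k => by
    rw [ip_val, Fin.ext_iff]; omega
  have q0 : ∀ k : Fin n, (iq k).val = 0 ↔ False := fun k =>
    ⟨fun h => by rw [iq_val] at h; omega, False.elim⟩
  have q1 : ∀ k : Fin n, (iq k).val = 1 ↔ k = i0 := fun k => by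
    rw [iq_val, Fin.ext_iff]; omega
  have q2 : ∀ k : Fin n, (iq k).val = 2 ↔ False := fun k =>
    ⟨fun h => by rw [iq_val] at h; omega, False.elim⟩
  have q4 : ∀ k : Fin n, (iq k).val = 4 ↔ False := fun k =>
    ⟨fun h => by rw [iq_val] at h; omega, False.elim⟩
  have e1 : B₁ = fun t => cuspC (ep i0) (ep i2) t + (-(1 / 3) * t ^ 6) • evq i0 := by
    subst hB₁
    ext t j
    rcases idx_cases j with ⟨k, rfl⟩ | ⟨k, rfl⟩
    · simp only [cuspC, Pi.add_apply, Pi.sub_apply, Pi.smul_apply, ep_p, evq_p, smul_eq_mul,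
        p0, p1, p4, if_false]
      by_cases hk : k = i0
      · subst hk; simp [h02]
      · simp [hk]; split_ifs <;> simp
    · simp only [cuspC, Pi.add_apply, Pi.sub_apply, Pi.smul_apply, ep_q, evq_q, smul_eq_mul,
        q0, q1, q4, if_false]
      by_cases hk : k = i0
      · subst hk; simp
      · simp [hk]
  have e2 : B₂ = cuspC (ep i0) (ep i1) := by
    subst hB₂
    ext t j
    rcases idx_cases j with ⟨k, rfl⟩ | ⟨k, rfl⟩
    · simp only [cuspC, Pi.sub_apply, Pi.smul_apply, ep_p, smul_eq_mul, p0, p2]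
      by_cases hk : k = i0
      · subst hk; simp [h01]
      · simp [hk]; split_ifs <;> simp
    · simp only [cuspC, Pi.sub_apply, Pi.smul_apply, ep_q, smul_eq_mul, q0, q2, if_false]
      simp
  clear hB₁ hB₂
  have v1 : ∀ (a b : ℝ) (i : Fin n) (t : ℝ), (lagG i0 i2 a b).H i (B₁ t) =
      (if i = i0 then (-(1 / 3) + a - b) * t ^ 6 else 0) + (if i = i2 then (-3 * a) * t ^ 7 else 0) := by
    intro a b i t
    simp only [lagG, gradS, e1, cuspC, Pi.add_apply, Pi.sub_apply, Pi.smul_apply, ep_p, ep_q,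
      evq_p, evq_q, smul_eq_mul]
    simp only [h02, h02.symm, if_true, if_false]
    split_ifs <;> ring
  have v2 : ∀ (a : ℝ) (i : Fin n) (t : ℝ), (lagG i0 i2 a 0).H i (B₂ t) = 0 := by
    intro a i t
    simp only [lagG, gradS, e2, cuspC, Pi.sub_apply, Pi.smul_apply, ep_p, ep_q, smul_eq_mul]
    simp only [h02.symm, h01, h12.symm, if_true, if_false]
    split_ifs <;> ring
  have t2 : ∀ a, tOrd B₂ (lagG i0 i2 a 0) = ⊤ := by
    intro a
    rw [tOrd, iInf_eq_top]
    exact fun i => vanish_zero (v2 a i)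
  refine ⟨le_antisymm ?_ ?_, ?_, ?_⟩
  · refine iSup_le fun L => ?_
    by_contra hlt
    rw [not_le, lt_min_iff] at hlt
    obtain ⟨g1, g2⟩ := hlt
    subst e1 e2
    refine no_lag L i0 i1 i2 h01 h02 (fun i => ?_) (fun i => ?_)
    · refine little_of_vanish ?_ ?_ (g1.trans_le (iInf_le _ i))
      · exact ((L.smooth i).comp ((cuspC_smooth _ _).add (by fun_prop))).contDiffAt
      · simp [cuspC_zero, L.zero_at_zero]
    · refine little_of_vanish ?_ ?_ (g2.trans_le (iInf_le _ i))
      · exact ((L.smooth i).comp (cuspC_smooth _ _)).contDiffAt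
      · simp [cuspC_zero, L.zero_at_zero]
  · refine le_trans ?_ (le_iSup _ (lagG i0 i2 (1 / 3) 0))
    rw [t2, min_eq_left le_top, tOrd]
    refine le_iInf fun i => ?_
    have : (fun t => (lagG i0 i2 (1 / 3) 0).H i (B₁ t)) =
        fun t => (if i = i2 then -1 else 0) * t ^ 7 := by
      funext t
      rw [v1]
      split_ifs <;> ring
    rw [this]
    exact vanish_pow _
  · refine top_le_iff.1 (le_trans ?_ (le_iSup _ (lagG i0 i2 0 (-(1 / 3)))))
    rw [tOrd, top_le_iff, iInf_eq_top]
    refine fun i => vanish_zero fun t => ?_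
    rw [v1]
    split_ifs <;> ring
  · refine top_le_iff.1 (le_trans ?_ (le_iSup _ (lagG i0 i2 0 0)))
    rw [t2]

end
end

section
/- Let n ≥ 3. Consider the three curve-germs in ℝ^{2n} (coordinates (p₁,q₁,p₂,q₂,p₃,q₃,…,pₙ,qₙ), all unlisted coordinates equal to 0): C₁(t) = (t³, 0, −t², 0, 0, 0, …, 0), B₊(t) = (t², (1/3)t³, 0, 0, t, 0, …, 0) and B₋(t) = (−t², (1/3)t³, 0, 0, t, 0, …, 0) (the class (T₈)^{6,2}). Then Lt(C₁,B₊,B₋) = 4, Lt(C₁) = ∞, and Lt(B₊,B₋) = 4. -/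
noncomputable section

section
open Filter Topology Set Asymptotics

lemma aux_second_diff {W V : Type*} [NormedAddCommGroup W] [NormedSpace ℝ W]
    [NormedAddCommGroup V] [NormedSpace ℝ V] {Φ : W → V} {r C : ℝ} (hC : 0 ≤ C)
    (hd : ∀ x ∈ Metric.ball (0:W) r, DifferentiableAt ℝ Φ x)
    (hL : ∀ x ∈ Metric.ball (0:W) r, ∀ y ∈ Metric.ball (0:W) r,
      ‖fderiv ℝ Φ x - fderiv ℝ Φ y‖ ≤ C * ‖x - y‖)
    (x y : W) (h : ‖x‖ + ‖y‖ < r) :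
    ‖Φ (x + y) + Φ (x - y) - (2:ℝ) • Φ x‖ ≤ 2 * C * ‖y‖ ^ 2 := by
  have hmem : ∀ s : ℝ, |s| ≤ 1 → x + s • y ∈ Metric.ball (0:W) r := by
    intro s hs
    rw [mem_ball_zero_iff]
    calc ‖x + s • y‖ ≤ ‖x‖ + ‖s • y‖ := norm_add_le _ _
      _ ≤ ‖x‖ + 1 * ‖y‖ := by rw [norm_smul, Real.norm_eq_abs]; gcongr
      _ < r := by linarith
  have hder : ∀ c s : ℝ, |c * s| ≤ 1 → HasDerivAt (fun s : ℝ => Φ (x + (c * s) • y))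
      (c • fderiv ℝ Φ (x + (c * s) • y) y) s := by
    intro c s hs
    have h1 : HasDerivAt (fun s : ℝ => x + (c * s) • y) (c • y) s := by
      have := (((hasDerivAt_id s).const_mul c).smul_const y).const_add x
      simpa using this
    have := (hd _ (hmem _ hs)).hasFDerivAt.comp_hasDerivAt s h1
    simpa [Function.comp_def] using this
  have key := norm_image_sub_le_of_norm_deriv_le_segment_01'
    (f := fun s : ℝ => Φ (x + (1 * s) • y) + Φ (x + (-1 * s) • y))
    (f' := fun s : ℝ => (1:ℝ) • fderiv ℝ Φ (x + (1 * s) • y) y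
      + (-1:ℝ) • fderiv ℝ Φ (x + (-1 * s) • y) y) (C := 2 * C * ‖y‖ ^ 2) ?_ ?_
  · have e : (fun s : ℝ => Φ (x + (1 * s) • y) + Φ (x + (-1 * s) • y)) 1
        - (fun s : ℝ => Φ (x + (1 * s) • y) + Φ (x + (-1 * s) • y)) 0
        = Φ (x + y) + Φ (x - y) - (2:ℝ) • Φ x := by
      simp [two_smul, sub_eq_add_neg]
    rwa [e] at key
  · intro s hs
    have h1 : |s| ≤ 1 := by rw [abs_of_nonneg hs.1]; exact hs.2
    exact ((hder 1 s (by simpa using h1)).add (hder (-1) s (by simpa using h1))).hasDerivWithinAt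
  · intro s hs
    have h1 : |s| ≤ 1 := by rw [abs_of_nonneg hs.1]; exact hs.2.le
    have := hL _ (hmem (1 * s) (by simpa using h1)) _ (hmem (-1 * s) (by simpa using h1))
    have e : (1:ℝ) • fderiv ℝ Φ (x + (1 * s) • y) y + (-1:ℝ) • fderiv ℝ Φ (x + (-1 * s) • y) y
      = (fderiv ℝ Φ (x + (1 * s) • y) - fderiv ℝ Φ (x + (-1 * s) • y)) y := by
      simp [sub_eq_add_neg]
    rw [e]
    have e2 : x + (1 * s) • y - (x + (-1 * s) • y) = (2 * s) • y := by module
    rw [e2, norm_smul, Real.norm_eq_abs, abs_mul, abs_of_nonneg hs.1] at this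
    calc _ ≤ ‖fderiv ℝ Φ (x + (1 * s) • y) - fderiv ℝ Φ (x + (-1 * s) • y)‖ * ‖y‖ :=
          ContinuousLinearMap.le_opNorm _ _
      _ ≤ (C * (|2| * s * ‖y‖)) * ‖y‖ := by gcongr
      _ ≤ (C * (|2| * 1 * ‖y‖)) * ‖y‖ := by gcongr; exact hs.2.le
      _ = _ := by norm_num; ring

lemma aux_third_diff {W V : Type*} [NormedAddCommGroup W] [NormedSpace ℝ W]
    [NormedAddCommGroup V] [NormedSpace ℝ V] {Φ : W → V} {r C : ℝ} (hC : 0 ≤ C)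
    (hd : ∀ x ∈ Metric.ball (0:W) r, DifferentiableAt ℝ Φ x)
    (hd2 : ∀ x ∈ Metric.ball (0:W) r, DifferentiableAt ℝ (fderiv ℝ Φ) x)
    (hL : ∀ x ∈ Metric.ball (0:W) r, ∀ y ∈ Metric.ball (0:W) r,
      ‖fderiv ℝ (fderiv ℝ Φ) x - fderiv ℝ (fderiv ℝ Φ) y‖ ≤ C * ‖x - y‖)
    (x y : W) (h : ‖x‖ + ‖y‖ < r) :
    ‖Φ (x + y) - Φ (x - y) - (2:ℝ) • fderiv ℝ Φ x y‖ ≤ 2 * C * ‖y‖ ^ 3 := by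
  have hmem : ∀ s : ℝ, |s| ≤ 1 → x + s • y ∈ Metric.ball (0:W) r := by
    intro s hs
    rw [mem_ball_zero_iff]
    calc ‖x + s • y‖ ≤ ‖x‖ + ‖s • y‖ := norm_add_le _ _
      _ ≤ ‖x‖ + 1 * ‖y‖ := by rw [norm_smul, Real.norm_eq_abs]; gcongr
      _ < r := by linarith
  have hder : ∀ c s : ℝ, |c * s| ≤ 1 → HasDerivAt (fun s : ℝ => Φ (x + (c * s) • y))
      (c • fderiv ℝ Φ (x + (c * s) • y) y) s := by
    intro c s hs
    have h1 : HasDerivAt (fun s : ℝ => x + (c * s) • y) (c • y) s := by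
      have := (((hasDerivAt_id s).const_mul c).smul_const y).const_add x
      simpa using this
    have := (hd _ (hmem _ hs)).hasFDerivAt.comp_hasDerivAt s h1
    simpa [Function.comp_def] using this
  have key := norm_image_sub_le_of_norm_deriv_le_segment_01'
    (f := fun s : ℝ => Φ (x + (1 * s) • y) - Φ (x + (-1 * s) • y) - (s * 2) • fderiv ℝ Φ x y)
    (f' := fun s : ℝ => (1:ℝ) • fderiv ℝ Φ (x + (1 * s) • y) y
      - (-1:ℝ) • fderiv ℝ Φ (x + (-1 * s) • y) y - (1 * 2 : ℝ) • fderiv ℝ Φ x y)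
      (C := 2 * C * ‖y‖ ^ 3) ?_ ?_
  · simpa [sub_eq_add_neg] using key
  · intro s hs
    have h1 : |s| ≤ 1 := by rw [abs_of_nonneg hs.1]; exact hs.2
    exact (((hder 1 s (by simpa using h1)).sub (hder (-1) s (by simpa using h1))).sub
      (((hasDerivAt_id s).mul_const 2).smul_const _)).hasDerivWithinAt
  · intro s hs
    have h1 : |s| ≤ 1 := by rw [abs_of_nonneg hs.1]; exact hs.2.le
    have hsy : ‖s • y‖ ≤ ‖y‖ := by
      rw [norm_smul, Real.norm_eq_abs]; exact mul_le_of_le_one_left (norm_nonneg _) h1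
    have := aux_second_diff hC hd2 hL x (s • y) (by linarith)
    have e : (1:ℝ) • fderiv ℝ Φ (x + (1 * s) • y) y
      - (-1:ℝ) • fderiv ℝ Φ (x + (-1 * s) • y) y - (1 * 2 : ℝ) • fderiv ℝ Φ x y
      = (fderiv ℝ Φ (x + s • y) + fderiv ℝ Φ (x - s • y) - (2:ℝ) • fderiv ℝ Φ x) y := by
      simp [sub_eq_add_neg]
    rw [e]
    calc _ ≤ ‖fderiv ℝ Φ (x + s • y) + fderiv ℝ Φ (x - s • y) - (2:ℝ) • fderiv ℝ Φ x‖ * ‖y‖ :=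
          ContinuousLinearMap.le_opNorm _ _
      _ ≤ (2 * C * ‖y‖ ^ 2) * ‖y‖ := by gcongr; exact this.trans (by gcongr)
      _ = _ := by ring

lemma aux_nice {W V : Type*} [NormedAddCommGroup W] [NormedSpace ℝ W]
    [NormedAddCommGroup V] [NormedSpace ℝ V] {Φ : W → V} (h : ContDiffAt ℝ 2 Φ 0) :
    ∃ C : ℝ, 0 ≤ C ∧ ∀ᶠ r in 𝓝[>] (0:ℝ), (∀ x ∈ Metric.ball (0:W) r, DifferentiableAt ℝ Φ x) ∧
    (∀ x ∈ Metric.ball (0:W) r, ∀ y ∈ Metric.ball (0:W) r,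
      ‖fderiv ℝ Φ x - fderiv ℝ Φ y‖ ≤ C * ‖x - y‖) := by
  have h1 : ContDiffAt ℝ 1 (fderiv ℝ Φ) 0 := h.fderiv_right (by norm_num)
  obtain ⟨K, t, ht, hK⟩ := h1.exists_lipschitzOnWith
  have h2 : ∀ᶠ x in 𝓝 (0:W), DifferentiableAt ℝ Φ x := by
    filter_upwards [h.eventually (by simp)] with x hx
    exact hx.differentiableAt (by simp)
  obtain ⟨r, hr, hb⟩ := Metric.mem_nhds_iff.1 (inter_mem ht h2)
  refine ⟨K, K.2, ?_⟩
  filter_upwards [Ioo_mem_nhdsGT hr] with r' hr'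
  have hs : Metric.ball (0:W) r' ⊆ t ∩ {x | DifferentiableAt ℝ Φ x} :=
    (Metric.ball_subset_ball hr'.2.le).trans hb
  refine ⟨fun x hx => (hs hx).2, fun x hx y hy => ?_⟩
  have := hK.dist_le_mul x (hs hx).1 y (hs hy).1
  rwa [dist_eq_norm, dist_eq_norm] at this

lemma aux_core {W V : Type*} [NormedAddCommGroup W] [NormedSpace ℝ W]
    [NormedAddCommGroup V] [NormedSpace ℝ V] {Ψ : W → V} (h : ContDiffAt ℝ 3 Ψ 0)
    (h0 : Ψ 0 = 0) (Ω : V →L[ℝ] V →L[ℝ] ℝ)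
    (hΩ : ∀ᶠ x in 𝓝 (0:W), ∀ u v, Ω (fderiv ℝ Ψ x u) (fderiv ℝ Ψ x v) = 0)
    (a b c : W) (a' b' c' : V)
    (hp : (fun t : ℝ => Ψ ((t • a + t ^ 3 • c) + t ^ 2 • b) - (t • a' + t ^ 3 • c' + t ^ 2 • b'))
      =O[𝓝[>] 0] (fun t : ℝ => t ^ 5))
    (hm : (fun t : ℝ => Ψ ((t • a + t ^ 3 • c) - t ^ 2 • b) - (t • a' + t ^ 3 • c' - t ^ 2 • b'))
      =O[𝓝[>] 0] (fun t : ℝ => t ^ 5))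
    (hab : Ω a' b' = 0) (hcb : Ω c' b' ≠ 0) : False := by
  obtain ⟨C1, hC1, hn1⟩ := aux_nice (h.of_le (by norm_num) : ContDiffAt ℝ 2 Ψ 0)
  obtain ⟨C2, hC2, hn2⟩ := aux_nice (h.fderiv_right (m := 2) (by norm_num))
  obtain ⟨r, ⟨hd1, hL1⟩, ⟨hd2, hL2⟩, hr⟩ := (hn1.and (hn2.and self_mem_nhdsWithin)).exists
  replace hr : 0 < r := hr
  set γ : ℝ → W := fun t => t • a + t ^ 3 • c with hγ
  have hγ0 : γ 0 = 0 := by simp [hγ]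
  have hγc : Continuous γ := by fun_prop
  have hsm : ∀ᶠ t in 𝓝 (0:ℝ), ‖γ t‖ + ‖t ^ 2 • b‖ < r := by
    have : ContinuousAt (fun t : ℝ => ‖γ t‖ + ‖t ^ 2 • b‖) 0 := by fun_prop
    exact this.eventually_lt continuousAt_const (by simpa [hγ0] using hr)
  have hsm' := hsm.filter_mono (nhdsWithin_le_nhds (s := Ioi 0))
  have hpow : ∀ {m k : ℕ}, k ≤ m → (fun t : ℝ => t ^ m) =O[𝓝[>] 0] (fun t : ℝ => t ^ k) := by
    intro m k hmk
    refine IsBigO.of_bound 1 ?_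
    filter_upwards [Ioo_mem_nhdsGT (zero_lt_one' ℝ)] with t ht
    rw [norm_pow, norm_pow, one_mul, Real.norm_of_nonneg ht.1.le]
    exact pow_le_pow_of_le_one ht.1.le ht.2.le hmk
  -- second difference
  have e2 : (fun t : ℝ => Ψ (γ t + t ^ 2 • b) + Ψ (γ t - t ^ 2 • b) - (2:ℝ) • Ψ (γ t))
      =O[𝓝[>] 0] (fun t : ℝ => t ^ 4) := by
    refine IsBigO.of_bound (2 * C1 * ‖b‖ ^ 2) ?_
    filter_upwards [hsm'] with t ht
    refine (aux_second_diff hC1 hd1 hL1 _ _ ht).trans (le_of_eq ?_)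
    rw [norm_smul, norm_pow, norm_pow]; ring
  have e3 : (fun t : ℝ => Ψ (γ t + t ^ 2 • b) - Ψ (γ t - t ^ 2 • b)
      - (2:ℝ) • fderiv ℝ Ψ (γ t) (t ^ 2 • b)) =O[𝓝[>] 0] (fun t : ℝ => t ^ 6) := by
    refine IsBigO.of_bound (2 * C2 * ‖b‖ ^ 3) ?_
    filter_upwards [hsm'] with t ht
    refine (aux_third_diff hC2 hd1 hd2 hL2 _ _ ht).trans (le_of_eq ?_)
    rw [norm_smul, norm_pow, norm_pow]; ring
  have hf : (fun t : ℝ => Ψ (γ t) - (t • a' + t ^ 3 • c')) =O[𝓝[>] 0] (fun t : ℝ => t ^ 4) := by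
    have := (((hp.add hm).trans (hpow (by norm_num))).sub e2).const_smul_left (1/2 : ℝ)
    refine this.congr_left fun t => ?_
    simp only [Pi.smul_apply]
    module
  have hg5 : (fun t : ℝ => t ^ 2 • (fderiv ℝ Ψ (γ t) b - b')) =O[𝓝[>] 0] (fun t : ℝ => t ^ 5) := by
    have := (((hp.sub hm)).sub (e3.trans (hpow (by norm_num)))).const_smul_left (1/2 : ℝ)
    refine this.congr_left fun t => ?_
    simp only [map_smul, Pi.smul_apply]
    module
  obtain ⟨M, hM, hfM⟩ := hf.exists_pos
  obtain ⟨N, hN, hgN⟩ := hg5.exists_pos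
  have hfM := hfM.bound
  have hgN := hgN.bound
  -- boundedness of the velocity
  have hvel : ContinuousAt (fun t : ℝ => ‖fderiv ℝ Ψ (γ t) (a + (3 * t ^ 2) • c)‖) 0 := by
    have hc1 : ContinuousAt (fderiv ℝ Ψ) (γ 0) := by
      rw [hγ0]; exact (hd2 0 (by simpa using hr)).continuousAt
    have hc2 : ContinuousAt (fun t => fderiv ℝ Ψ (γ t)) 0 := hc1.comp hγc.continuousAt
    exact (hc2.clm_apply (by fun_prop)).norm
  obtain ⟨A, hA⟩ : ∃ A : ℝ, ∀ᶠ t in 𝓝 (0:ℝ), ‖fderiv ℝ Ψ (γ t) (a + (3 * t ^ 2) • c)‖ < A :=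
    ⟨_, hvel.eventually_lt continuousAt_const (lt_add_one _)⟩
  have hΩγ : ∀ᶠ t in 𝓝 (0:ℝ), ∀ u v, Ω (fderiv ℝ Ψ (γ t) u) (fderiv ℝ Ψ (γ t) v) = 0 := by
    have : Tendsto γ (𝓝 0) (𝓝 0) := by simpa [hγ0] using hγc.tendsto 0
    exact this.eventually hΩ
  have hall := (((hA.and hΩγ).and hsm).filter_mono (nhdsWithin_le_nhds (s := Ioi 0))).and
    (hfM.and hgN)
  obtain ⟨ε, hε, hb⟩ := mem_nhdsGT_iff_exists_Ioo_subset.1 hall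
  replace hε : 0 < ε := hε
  have hA0 : 0 ≤ A := by
    have : ε / 2 ∈ Ioo 0 ε := ⟨by linarith, by linarith⟩
    exact (norm_nonneg _).trans (hb this).1.1.1.le
  have hder : ∀ t ∈ Ico 0 ε, HasDerivAt (fun t => Ω (Ψ (γ t)) b')
      (Ω (fderiv ℝ Ψ (γ t) (a + (3 * t ^ 2) • c)) b') t := by
    intro t ht
    have hγt : γ t ∈ Metric.ball (0:W) r := by
      rw [mem_ball_zero_iff]
      rcases ht.1.eq_or_lt with h0 | h0
      · rw [← h0, hγ0]; simpa using hr
      · have := (hb ⟨h0, ht.2⟩).1.2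
        have h3 := norm_nonneg (t ^ 2 • b)
        linarith
    have h1 : HasDerivAt γ (a + (3 * t ^ 2) • c) t := by
      have := ((hasDerivAt_id t).smul_const a).add ((hasDerivAt_pow 3 t).smul_const c)
      simpa [hγ, Pi.add_def] using this
    have h2 := (hd1 _ hγt).hasFDerivAt.comp_hasDerivAt t h1
    have h3 := (Ω.flip b').hasFDerivAt.comp_hasDerivAt t h2
    simpa [Function.comp_def] using h3
  have hφ : ∀ t ∈ Ioo 0 ε, |Ω (Ψ (γ t)) b'| ≤ ‖Ω‖ * A * N * t ^ 4 := by
    intro t ht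
    obtain ⟨s, hs, hse⟩ := exists_hasDerivAt_eq_slope (fun t => Ω (Ψ (γ t)) b')
      (fun t => Ω (fderiv ℝ Ψ (γ t) (a + (3 * t ^ 2) • c)) b') ht.1
      (fun s hs => (hder s ⟨hs.1, hs.2.trans_lt ht.2⟩).continuousAt.continuousWithinAt)
      (fun s hs => hder s ⟨hs.1.le, hs.2.trans ht.2⟩)
    have hs' := hb ⟨hs.1, hs.2.trans ht.2⟩
    obtain ⟨⟨⟨hsA, hsΩ⟩, -⟩, -, hsN⟩ := hs'
    have hsg : ‖fderiv ℝ Ψ (γ s) b - b'‖ ≤ N * s ^ 3 := by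
      rw [norm_smul, norm_pow, norm_pow, Real.norm_of_nonneg hs.1.le] at hsN
      have : 0 < s ^ 2 := by have := hs.1; positivity
      refine le_of_mul_le_mul_left (hsN.trans (le_of_eq (by ring))) this
    have e : Ω (fderiv ℝ Ψ (γ s) (a + (3 * s ^ 2) • c)) b'
      = - Ω (fderiv ℝ Ψ (γ s) (a + (3 * s ^ 2) • c)) (fderiv ℝ Ψ (γ s) b - b') := by
      rw [map_sub, hsΩ]; ring
    have h1 : |Ω (fderiv ℝ Ψ (γ s) (a + (3 * s ^ 2) • c)) b'| ≤ ‖Ω‖ * A * (N * s ^ 3) := by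
      rw [e, abs_neg, ← Real.norm_eq_abs]
      refine (Ω.le_opNorm₂ _ _).trans ?_
      gcongr
    have h2 : Ω (Ψ (γ t)) b' = t * Ω (fderiv ℝ Ψ (γ s) (a + (3 * s ^ 2) • c)) b' := by
      have ht0 : t ≠ 0 := ht.1.ne'
      rw [hse]; simp [hγ0, h0]; field_simp
    have ht0 : 0 < t := ht.1
    have hs0 : 0 < s := hs.1
    rw [h2, abs_mul, abs_of_pos ht0]
    calc _ ≤ t * (‖Ω‖ * A * (N * s ^ 3)) := by gcongr
      _ ≤ t * (‖Ω‖ * A * (N * t ^ 3)) := by gcongr; exact hs.2.le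
      _ = _ := by ring
  have hfin : ∀ t ∈ Ioo 0 ε, |Ω c' b'| ≤ (‖Ω‖ * A * N + ‖Ω‖ * M * ‖b'‖) * t := by
    intro t ht
    have ht0 : 0 < t := ht.1
    have h1 := hφ t ht
    have h2 := (hb ht).2.1
    rw [norm_pow, Real.norm_of_nonneg ht0.le] at h2
    have h3 : ‖Ω (Ψ (γ t) - (t • a' + t ^ 3 • c')) b'‖ ≤ ‖Ω‖ * (M * t ^ 4) * ‖b'‖ := by
      refine (Ω.le_opNorm₂ _ _).trans ?_
      gcongr
    have e : Ω (Ψ (γ t) - (t • a' + t ^ 3 • c')) b' = Ω (Ψ (γ t)) b' - t ^ 3 * Ω c' b' := by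
      simp [hab]
    rw [e, Real.norm_eq_abs] at h3
    have h4 : |t ^ 3 * Ω c' b'| ≤ ‖Ω‖ * A * N * t ^ 4 + ‖Ω‖ * (M * t ^ 4) * ‖b'‖ := by
      have := abs_sub_abs_le_abs_sub (t ^ 3 * Ω c' b') (Ω (Ψ (γ t)) b')
      rw [abs_sub_comm] at this
      linarith
    have h5 : (0:ℝ) < t ^ 3 := by positivity
    rw [abs_mul, abs_of_pos h5] at h4
    refine le_of_mul_le_mul_left (h4.trans (le_of_eq (by ring))) h5
  have hlim : Tendsto (fun t : ℝ => (‖Ω‖ * A * N + ‖Ω‖ * M * ‖b'‖) * t) (𝓝[>] 0) (𝓝 0) := by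
    have : ContinuousAt (fun t : ℝ => (‖Ω‖ * A * N + ‖Ω‖ * M * ‖b'‖) * t) 0 := by fun_prop
    have := this.tendsto
    simp only [mul_zero] at this
    exact this.mono_left nhdsWithin_le_nhds
  have := ge_of_tendsto hlim (by filter_upwards [Ioo_mem_nhdsGT hε] with t ht using hfin t ht)
  exact hcb (abs_eq_zero.1 (le_antisymm this (abs_nonneg _)))

lemma aux_geom {E V : Type*} [NormedAddCommGroup E] [NormedSpace ℝ E] [FiniteDimensional ℝ E]
    [NormedAddCommGroup V] [NormedSpace ℝ V] [FiniteDimensional ℝ V]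
    {H : V → E} (hH : ContDiff ℝ 3 H) (h0 : H 0 = 0)
    (hs : Function.Surjective (fderiv ℝ H 0)) (Ω : V →L[ℝ] V →L[ℝ] ℝ)
    (hΩ : ∀ᶠ x in 𝓝 (0:V), H x = 0 → ∀ u v, fderiv ℝ H x u = 0 → fderiv ℝ H x v = 0 → Ω u v = 0)
    (a b c : V)
    (hp : (fun t : ℝ => H (t • a + t ^ 3 • c + t ^ 2 • b)) =O[𝓝[>] 0] (fun t : ℝ => t ^ 5))
    (hm : (fun t : ℝ => H (t • a + t ^ 3 • c - t ^ 2 • b)) =O[𝓝[>] 0] (fun t : ℝ => t ^ 5))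
    (hab : Ω a b = 0) (hcb : Ω c b ≠ 0) : False := by
  have : CompleteSpace V := FiniteDimensional.complete ℝ V
  obtain ⟨π, hπ⟩ := (fderiv ℝ H 0).ker_closedComplemented_of_finiteDimensional_range
  set G : V → E × (fderiv ℝ H 0).ker := fun x => (H x, π x) with hG
  have hGc : ContDiff ℝ 3 G := hH.prodMk π.contDiff
  have hG0 : G 0 = 0 := by simp [hG, h0]
  have hbij : Function.Bijective ((fderiv ℝ H 0).prod π) := by
    constructor
    · rw [injective_iff_map_eq_zero]
      intro x hx
      have h1 : fderiv ℝ H 0 x = 0 := congrArg Prod.fst hx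
      have h2 : π x = 0 := congrArg Prod.snd hx
      have := hπ ⟨x, h1⟩
      simp only at this
      rw [h2] at this
      exact (congrArg Subtype.val this).symm
    · rintro ⟨y, k⟩
      obtain ⟨x, hx⟩ := hs y
      refine ⟨x - π x + k, ?_⟩
      have h1 : fderiv ℝ H 0 (π x : V) = 0 := (π x).2
      have h2 : fderiv ℝ H 0 (k : V) = 0 := k.2
      ext1
      · simp [h1, h2, hx]
      · simp [hπ]
  let e : V ≃L[ℝ] E × (fderiv ℝ H 0).ker :=
    (LinearEquiv.ofBijective ((fderiv ℝ H 0).prod π : V →ₗ[ℝ] _) hbij).toContinuousLinearEquiv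
  have he : (e : V →L[ℝ] E × (fderiv ℝ H 0).ker) = (fderiv ℝ H 0).prod π := by
    ext x <;> rfl
  have hGd : HasFDerivAt G (e : V →L[ℝ] E × (fderiv ℝ H 0).ker) 0 := by
    rw [he]
    exact ((hH.differentiable (by norm_num)) 0).hasFDerivAt.prodMk π.hasFDerivAt
  have hn3 : (3 : WithTop ℕ∞) ≠ 0 := by norm_num
  obtain ⟨P, hP, hl, hr⟩ : ∃ P : E × (fderiv ℝ H 0).ker → V, ContDiffAt ℝ 3 P 0 ∧
      (∀ᶠ x in 𝓝 (0:V), P (G x) = x) ∧ (∀ᶠ y in 𝓝 0, G (P y) = y) := by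
    refine ⟨hGc.contDiffAt.localInverse hGd hn3, ?_, ?_, ?_⟩
    · have := hGc.contDiffAt.to_localInverse hGd hn3
      rwa [hG0] at this
    · exact (hGc.contDiffAt.hasStrictFDerivAt' hGd hn3).eventually_left_inverse
    · have := (hGc.contDiffAt.hasStrictFDerivAt' hGd hn3).eventually_right_inverse
      rwa [hG0] at this
  have hP0 : P 0 = 0 := by
    have := hl.self_of_nhds
    rwa [hG0] at this
  have hι : Continuous (fun z : (fderiv ℝ H 0).ker => ((0:E), z)) := by fun_prop
  have hΨ : ContDiffAt ℝ 3 (fun z : (fderiv ℝ H 0).ker => P (0, z)) 0 :=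
    ContDiffAt.comp (0 : (fderiv ℝ H 0).ker) (g := P) (f := fun z => ((0:E), z)) hP
      (by fun_prop)
  have hι0 : Tendsto (fun z : (fderiv ℝ H 0).ker => ((0:E), z)) (𝓝 0) (𝓝 0) := by
    have := hι.tendsto 0
    exact this
  have hΨ0 : Tendsto (fun z : (fderiv ℝ H 0).ker => P (0, z)) (𝓝 0) (𝓝 0) := by
    have h1 := hP.continuousAt.tendsto
    rw [hP0] at h1
    exact h1.comp hι0
  -- curves
  obtain ⟨K, T, hT, hK⟩ := (hP.of_le (by norm_num) : ContDiffAt ℝ 1 P 0).exists_lipschitzOnWith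
  have hcurve : ∀ B : ℝ → V, Continuous B → B 0 = 0 →
      (fun t => H (B t)) =O[𝓝[>] 0] (fun t : ℝ => t ^ 5) →
      (fun t => P (0, π (B t)) - B t) =O[𝓝[>] 0] (fun t : ℝ => t ^ 5) := by
    intro B hB hB0 hHB
    refine IsBigO.trans (IsBigO.of_bound K ?_) hHB
    have hB' : Tendsto B (𝓝 0) (𝓝 0) := by simpa [hB0] using hB.tendsto 0
    have h1 : Tendsto (fun t => G (B t)) (𝓝 0) (𝓝 0) := by
      have := hGc.continuous.tendsto 0
      rw [hG0] at this
      exact this.comp hB'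
    have h2 : Tendsto (fun t => ((0:E), π (B t))) (𝓝 0) (𝓝 0) := by
      have : Tendsto (fun t => π (B t)) (𝓝 0) (𝓝 0) := by
        have := π.continuous.tendsto 0
        rw [map_zero] at this
        exact this.comp hB'
      exact hι0.comp this
    refine Filter.Eventually.filter_mono nhdsWithin_le_nhds ?_
    filter_upwards [h1 hT, h2 hT, hB'.eventually hl] with t ht1 ht2 ht3
    have := hK.dist_le_mul _ ht2 _ ht1
    rw [ht3, dist_eq_norm] at this
    refine this.trans (le_of_eq ?_)
    congr 1
    simp [hG, Prod.dist_eq]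
  refine aux_core hΨ hP0 Ω ?_ (π a) (π b) (π c) a b c ?_ ?_ hab hcb
  · have hz : ∀ᶠ z in 𝓝 (0 : (fderiv ℝ H 0).ker), H (P (0, z)) = 0 := by
      filter_upwards [hι0.eventually hr] with z hz
      exact congrArg Prod.fst hz
    filter_upwards [hz.eventually_nhds, hΨ0.eventually hΩ, hΨ.eventually (by simp)] with z h1 h2 h3
    have h4 : ∀ u, fderiv ℝ H (P (0, z)) (fderiv ℝ (fun z => P (0, z)) z u) = 0 := by
      intro u
      have h5 := ((hH.differentiable (by norm_num)) (P (0, z))).hasFDerivAt.comp z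
        (h3.differentiableAt (by norm_num)).hasFDerivAt
      have h6 : (H ∘ fun z => P (0, z)) =ᶠ[𝓝 z] fun _ => 0 := h1
      have h7 := (h5.congr_of_eventuallyEq h6.symm).unique (hasFDerivAt_const (0:E) z)
      exact congrArg (fun f => f u) h7
    intro u v
    exact h2 h1.self_of_nhds _ _ (h4 u) (h4 v)
  · have := hcurve (fun t => t • a + t ^ 3 • c + t ^ 2 • b) (by fun_prop) (by simp) hp
    simpa using this
  · have := hcurve (fun t => t • a + t ^ 3 • c - t ^ 2 • b) (by fun_prop) (by simp) hm
    simpa using this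

lemma aux_taylor_s12 {h : ℝ → ℝ} (hh : ContDiff ℝ (⊤ : ℕ∞) h)
    (h0 : ∀ m < 5, iteratedDeriv m h 0 = 0) : h =O[𝓝[>] 0] (fun t : ℝ => t ^ 5) := by
  have h5 : ContDiff ℝ (4 + 1) h := by
    have := contDiff_infty.1 hh 5
    exact_mod_cast this
  obtain ⟨C, hC⟩ := exists_taylor_mean_remainder_bound (f := h) (n := 4) (zero_le_one' ℝ)
    h5.contDiffOn
  refine IsBigO.of_bound C ?_
  filter_upwards [Ioo_mem_nhdsGT (zero_lt_one' ℝ)] with t ht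
  have := hC t ⟨ht.1.le, ht.2.le⟩
  rw [taylor_within_apply, Finset.sum_eq_zero] at this
  · rw [norm_pow, Real.norm_of_nonneg ht.1.le]
    simpa using this
  · intro k hk
    rw [iteratedDerivWithin_eq_iteratedDeriv (uniqueDiffOn_Icc zero_lt_one) _ (by simp),
      h0 k (by simpa using hk), smul_zero]
    exact (contDiff_infty.1 hh k).contDiffAt

lemma aux_fderiv_pi {n : ℕ} {V : Type*} [NormedAddCommGroup V] [NormedSpace ℝ V]
    {H : Fin n → V → ℝ} (hH : ∀ i, Differentiable ℝ (H i)) (x u : V) (i : Fin n) :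
    fderiv ℝ (fun x i => H i x) x u i = fderiv ℝ (H i) x u := by
  have : HasFDerivAt (fun x i => H i x) (ContinuousLinearMap.pi fun i => fderiv ℝ (H i) x) x :=
    hasFDerivAt_pi.2 fun i => (hH i x).hasFDerivAt
  rw [this.fderiv]; rfl

lemma aux_surj {n : ℕ} {V : Type*} [NormedAddCommGroup V] [NormedSpace ℝ V]
    (f : Fin n → V →L[ℝ] ℝ) (hf : LinearIndependent ℝ f) (g : V →L[ℝ] (Fin n → ℝ))
    (hg : ∀ u i, g u i = f i u) : Function.Surjective g := by
  by_contra hns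
  have h1 : LinearMap.range (g : V →ₗ[ℝ] (Fin n → ℝ)) < ⊤ := by
    rw [lt_top_iff_ne_top]
    intro h
    exact hns (LinearMap.range_eq_top.1 h)
  obtain ⟨φ, hφ, hle⟩ := Submodule.exists_le_ker_of_lt_top _ h1
  apply hφ
  have h2 : ∑ i, φ (Pi.single i 1) • f i = 0 := by
    ext u
    have : φ (g u) = 0 := hle ⟨u, rfl⟩
    rw [LinearMap.pi_apply_eq_sum_univ φ] at this
    simp only [ContinuousLinearMap.coe_sum', Finset.sum_apply, ContinuousLinearMap.coe_smul',
      Pi.smul_apply, ContinuousLinearMap.zero_apply, smul_eq_mul]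
    rw [← this]
    refine Finset.sum_congr rfl fun i _ => ?_
    rw [hg, smul_eq_mul, mul_comm]
    congr 2
    ext j
    simp [Pi.single_apply, eq_comm]
  have h3 := Fintype.linearIndependent_iff.1 hf _ h2
  refine LinearMap.pi_ext' fun i => ?_
  ext
  simpa using h3 i

def auxSymp (n : ℕ) : (Fin (2 * n) → ℝ) →L[ℝ] (Fin (2 * n) → ℝ) →L[ℝ] ℝ :=
  ∑ i : Fin n,
    ((ContinuousLinearMap.proj (R := ℝ) (φ := fun _ : Fin (2 * n) => ℝ)
        (⟨2 * i.val, by have := i.isLt; omega⟩ : Fin (2 * n))).smulRight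
      (ContinuousLinearMap.proj (R := ℝ) (φ := fun _ : Fin (2 * n) => ℝ)
        (⟨2 * i.val + 1, by have := i.isLt; omega⟩ : Fin (2 * n))) -
    (ContinuousLinearMap.proj (R := ℝ) (φ := fun _ : Fin (2 * n) => ℝ)
        (⟨2 * i.val + 1, by have := i.isLt; omega⟩ : Fin (2 * n))).smulRight
      (ContinuousLinearMap.proj (R := ℝ) (φ := fun _ : Fin (2 * n) => ℝ)
        (⟨2 * i.val, by have := i.isLt; omega⟩ : Fin (2 * n))))

lemma auxSymp_apply (n : ℕ) (u v : Fin (2 * n) → ℝ) : auxSymp n u v = stdSymp n u v := by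
  simp [auxSymp, stdSymp, ContinuousLinearMap.sum_apply]

lemma aux_deriv_zero {n : ℕ} (L : LagrangianGerm n) (B : ℝ → Fin (2 * n) → ℝ) (hB0 : B 0 = 0)
    (h : 4 < tOrd B L) (i : Fin n) : ∀ m < 5, iteratedDeriv m (fun t => L.H i (B t)) 0 = 0 := by
  intro m hm
  rcases Nat.eq_zero_or_pos m with rfl | hm0
  · simp [hB0, L.zero_at_zero]
  · by_contra hne
    have h1 : tOrd B L ≤ vanishOrder (fun t => L.H i (B t)) := iInf_le _ i
    have h2 : vanishOrder (fun t => L.H i (B t)) ≤ (m : ℕ∞) := sInf_le ⟨m, rfl, hm0, hne⟩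
    have h3 : (4 : ℕ∞) < (m : ℕ∞) := h.trans_le (h1.trans h2)
    have h4 : 4 < m := by exact_mod_cast h3
    omega

lemma aux_upper {n : ℕ} (hn : 3 ≤ n) (L : LagrangianGerm n) (Bp Bm : ℝ → Fin (2 * n) → ℝ)
    (hBp : Bp = fun (t : ℝ) (j : Fin (2 * n)) => if (j : ℕ) = 0 then t ^ 2 else if (j : ℕ) = 1 then (1 / 3) * t ^ 3 else if (j : ℕ) = 4 then t else (0 : ℝ))
    (hBm : Bm = fun (t : ℝ) (j : Fin (2 * n)) => if (j : ℕ) = 0 then -t ^ 2 else if (j : ℕ) = 1 then (1 / 3) * t ^ 3 else if (j : ℕ) = 4 then t else (0 : ℝ)) :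
    min (tOrd Bp L) (tOrd Bm L) ≤ 4 := by
  by_contra! hlt
  obtain ⟨hltp, hltm⟩ := lt_min_iff.1 hlt
  set a : Fin (2 * n) → ℝ := Pi.single ⟨4, by omega⟩ 1 with ha
  set b : Fin (2 * n) → ℝ := Pi.single ⟨0, by omega⟩ 1 with hb
  set c : Fin (2 * n) → ℝ := Pi.single ⟨1, by omega⟩ (1 / 3) with hc
  have hBp' : ∀ t, Bp t = t • a + t ^ 3 • c + t ^ 2 • b := by
    intro t
    ext j
    simp only [hBp, ha, hb, hc, Pi.add_apply, Pi.smul_apply, Pi.single_apply, Fin.ext_iff,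
      smul_eq_mul]
    split_ifs <;> first | omega | ring
  have hBm' : ∀ t, Bm t = t • a + t ^ 3 • c - t ^ 2 • b := by
    intro t
    ext j
    simp only [hBm, ha, hb, hc, Pi.add_apply, Pi.sub_apply, Pi.smul_apply, Pi.single_apply,
      Fin.ext_iff, smul_eq_mul]
    split_ifs <;> first | omega | ring
  have hd : ∀ i, Differentiable ℝ (L.H i) := fun i => (L.smooth i).differentiable (by simp)
  obtain ⟨U, hU, h0U, hlag⟩ := L.lagrangian
  have hO : ∀ B : ℝ → Fin (2 * n) → ℝ, ContDiff ℝ (⊤ : ℕ∞) B → B 0 = 0 → 4 < tOrd B L →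
      (fun t => (fun i => L.H i (B t))) =O[𝓝[>] 0] (fun t : ℝ => t ^ 5) := by
    intro B hB hB0 hlt
    rw [isBigO_pi]
    intro i
    exact aux_taylor_s12 ((L.smooth i).comp hB) (aux_deriv_zero L B hB0 hlt i)
  refine aux_geom (H := fun x i => L.H i x) ?_ ?_ ?_ (auxSymp n) ?_ a b c ?_ ?_ ?_ ?_
  · exact contDiff_pi.2 fun i => contDiff_infty.1 (L.smooth i) 3
  · ext i; exact L.zero_at_zero i
  · exact aux_surj _ (hlag 0 h0U L.zero_at_zero).1 _ fun u i => aux_fderiv_pi hd 0 u i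
  · filter_upwards [hU.mem_nhds h0U] with x hx hHx u v hu hv
    rw [auxSymp_apply]
    refine (hlag x hx (fun i => congrFun hHx i)).2 u v (fun i => ?_) (fun i => ?_)
    · rw [← aux_fderiv_pi hd, hu]; rfl
    · rw [← aux_fderiv_pi hd, hv]; rfl
  · have := hO Bp (by rw [funext hBp']; fun_prop) (by rw [hBp']; simp) hltp
    simpa only [hBp'] using this
  · have := hO Bm (by rw [funext hBm']; fun_prop) (by rw [hBm']; simp) hltm
    simpa only [hBm'] using this
  · rw [auxSymp_apply, stdSymp]
    refine Finset.sum_eq_zero fun i _ => ?_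
    simp only [ha, hb, Pi.single_apply, Fin.ext_iff]
    split_ifs <;> first | contradiction | omega | simp
  · rw [auxSymp_apply, stdSymp, Fintype.sum_eq_single (⟨0, by omega⟩ : Fin n)]
    · simp [hc, hb, Pi.single_apply, Fin.ext_iff]
    · intro i hi
      have hi' : (i : ℕ) ≠ 0 := fun h => hi (Fin.ext h)
      simp only [hc, hb, Pi.single_apply, Fin.ext_iff]
      split_ifs <;> first | contradiction | omega | simp

/-- The correction term of the explicit Lagrangian germ. -/
def auxCorr (n : ℕ) (hn : 3 ≤ n) (i : Fin n) (x : Fin (2 * n) → ℝ) : ℝ :=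
  if (i : ℕ) = 0 then (1 / 3) * x ⟨4, by omega⟩ ^ 3
  else if (i : ℕ) = 2 then x ⟨0, by omega⟩ * x ⟨4, by omega⟩ ^ 2 else 0

def auxH (n : ℕ) (hn : 3 ≤ n) (i : Fin n) (x : Fin (2 * n) → ℝ) : ℝ :=
  x ⟨2 * i.val + 1, by have := i.isLt; omega⟩ - auxCorr n hn i x

lemma auxH_smooth (n : ℕ) (hn : 3 ≤ n) (i : Fin n) : ContDiff ℝ (⊤ : ℕ∞) (auxH n hn i) := by
  unfold auxH auxCorr
  split_ifs <;> fun_prop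

lemma auxH_fderiv (n : ℕ) (hn : 3 ≤ n) (i : Fin n) (x u : Fin (2 * n) → ℝ) :
    fderiv ℝ (auxH n hn i) x u = u ⟨2 * i.val + 1, by have := i.isLt; omega⟩ -
      (if (i : ℕ) = 0 then x ⟨4, by omega⟩ ^ 2 * u ⟨4, by omega⟩
      else if (i : ℕ) = 2 then x ⟨4, by omega⟩ ^ 2 * u ⟨0, by omega⟩
        + 2 * x ⟨0, by omega⟩ * x ⟨4, by omega⟩ * u ⟨4, by omega⟩ else 0) := by
  have hp : ∀ j : Fin (2 * n), HasFDerivAt (fun x : Fin (2 * n) → ℝ => x j)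
      (ContinuousLinearMap.proj (R := ℝ) (φ := fun _ : Fin (2 * n) => ℝ) j) x :=
    fun j => hasFDerivAt_apply j x
  unfold auxH auxCorr
  split_ifs
  · have := (hp ⟨2 * i.val + 1, by have := i.isLt; omega⟩).sub
      (((hp ⟨4, by omega⟩).pow 3).const_mul (1 / 3))
    erw [this.fderiv]
    simp
    try ring
  · have := (hp ⟨2 * i.val + 1, by have := i.isLt; omega⟩).sub
      ((hp ⟨0, by omega⟩).mul ((hp ⟨4, by omega⟩).pow 2))
    erw [this.fderiv]
    simp
    try ring
  · have := (hp ⟨2 * i.val + 1, by have := i.isLt; omega⟩).sub_const 0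
    erw [this.fderiv]
    simp

def auxL (n : ℕ) (hn : 3 ≤ n) : LagrangianGerm n where
  H := auxH n hn
  smooth := auxH_smooth n hn
  zero_at_zero i := by simp [auxH, auxCorr]
  lagrangian := by
    refine ⟨Set.univ, isOpen_univ, trivial, fun x _ _ => ⟨?_, ?_⟩⟩
    · rw [Fintype.linearIndependent_iff]
      intro g hg i
      have h1 := congrArg (fun f : (Fin (2 * n) → ℝ) →L[ℝ] ℝ =>
        f (Pi.single ⟨2 * i.val + 1, by have := i.isLt; omega⟩ 1)) hg
      simp only [ContinuousLinearMap.coe_sum', Finset.sum_apply, ContinuousLinearMap.coe_smul',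
        Pi.smul_apply, ContinuousLinearMap.zero_apply, smul_eq_mul, auxH_fderiv] at h1
      rw [Fintype.sum_eq_single i] at h1
      · have h4 : ¬ (4 = 2 * (i : ℕ) + 1) := by omega
        simpa [Pi.single_apply, Fin.ext_iff, h4] using h1
      · intro j hj
        have h4 : ¬ (4 = 2 * (i : ℕ) + 1) := by omega
        have hj' : ¬ (j : ℕ) = i := fun h => hj (Fin.ext h)
        simp [Pi.single_apply, Fin.ext_iff, h4, hj']
    · intro u v hu hv
      have hu' := fun i => sub_eq_zero.1 ((auxH_fderiv n hn i x u).symm.trans (hu i))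
      have hv' := fun i => sub_eq_zero.1 ((auxH_fderiv n hn i x v).symm.trans (hv i))
      rw [stdSymp, Fintype.sum_eq_add (⟨0, by omega⟩ : Fin n) ⟨2, by omega⟩ (by simp)]
      · have u1 := hu' ⟨0, by omega⟩
        have u5 := hu' ⟨2, by omega⟩
        have v1 := hv' ⟨0, by omega⟩
        have v5 := hv' ⟨2, by omega⟩
        simp at u1 u5 v1 v5
        simp [u1, u5, v1, v5]
        ring
      · rintro i ⟨hi0, hi2⟩
        have h0 : ¬ (i : ℕ) = 0 := fun h => hi0 (Fin.ext h)
        have h2 : ¬ (i : ℕ) = 2 := fun h => hi2 (Fin.ext h)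
        simp [hu', hv', h0, h2]

lemma aux_vo_const : vanishOrder (fun _ => (0:ℝ)) = ⊤ := by
  unfold vanishOrder
  rw [sInf_eq_top]
  rintro k ⟨m, rfl, hm, h⟩
  simp at h

lemma aux_vo_four (c : ℝ) : 4 ≤ vanishOrder (fun t => c * t ^ 4) := by
  refine le_sInf ?_
  rintro k ⟨m, rfl, hm, h⟩
  by_contra! hlt
  have hlt' : m < 4 := by exact_mod_cast hlt
  apply h
  rw [iteratedDeriv_const_mul_field]
  interval_cases m <;> simp [iteratedDeriv_succ, iteratedDeriv_zero]

lemma aux_tC {n : ℕ} (hn : 3 ≤ n) (C₁ : ℝ → Fin (2 * n) → ℝ)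
    (hC₁ : C₁ = fun (t : ℝ) (j : Fin (2 * n)) => if (j : ℕ) = 0 then t ^ 3 else if (j : ℕ) = 2 then -t ^ 2 else (0 : ℝ)) :
    tOrd C₁ (auxL n hn) = ⊤ := by
  rw [tOrd, iInf_eq_top]
  intro i
  rw [← aux_vo_const]
  congr 1
  ext t
  have h2 : ¬ (2 * (i : ℕ) + 1 = 2) := by omega
  simp [auxL, auxH, auxCorr, hC₁, h2]

lemma aux_tB {n : ℕ} (hn : 3 ≤ n) (σ : ℝ) (B : ℝ → Fin (2 * n) → ℝ)
    (hB : B = fun (t : ℝ) (j : Fin (2 * n)) => if (j : ℕ) = 0 then σ * t ^ 2 else if (j : ℕ) = 1 then (1 / 3) * t ^ 3 else if (j : ℕ) = 4 then t else (0 : ℝ)) :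
    4 ≤ tOrd B (auxL n hn) := by
  refine le_iInf fun i => ?_
  have h4 : ¬ (2 * (i : ℕ) + 1 = 4) := by omega
  have : (fun t => (auxL n hn).H i (B t)) = fun t => (if (i : ℕ) = 2 then -σ else 0) * t ^ 4 := by
    ext t
    by_cases h0 : (i : ℕ) = 0
    · simp [auxL, auxH, auxCorr, hB, h0]
    · by_cases h2 : (i : ℕ) = 2
      · simp [auxL, auxH, auxCorr, hB, h2]; ring
      · simp [auxL, auxH, auxCorr, hB, h0, h2, h4]
  rw [this]
  exact aux_vo_four _

end

/-- Lagrangian tangency orders for the class `(T₈)^{6,2}`. -/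
theorem T8_62_lagrangian_tangency_orders
    (n : ℕ) (hn : 3 ≤ n)
    (C₁ Bp Bm : ℝ → Fin (2 * n) → ℝ)
    (hC₁ : C₁ = fun (t : ℝ) (j : Fin (2 * n)) => if (j : ℕ) = 0 then t ^ 3 else if (j : ℕ) = 2 then -t ^ 2 else (0 : ℝ))
    (hBp : Bp = fun (t : ℝ) (j : Fin (2 * n)) => if (j : ℕ) = 0 then t ^ 2 else if (j : ℕ) = 1 then (1 / 3) * t ^ 3 else if (j : ℕ) = 4 then t else (0 : ℝ))
    (hBm : Bm = fun (t : ℝ) (j : Fin (2 * n)) => if (j : ℕ) = 0 then -t ^ 2 else if (j : ℕ) = 1 then (1 / 3) * t ^ 3 else if (j : ℕ) = 4 then t else (0 : ℝ)) :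
    Lt3 C₁ Bp Bm = 4 ∧ Lt1 C₁ = ⊤ ∧ Lt2 Bp Bm = 4 := by
  have hB1 : 4 ≤ tOrd Bp (auxL n hn) := aux_tB hn 1 Bp (by simpa using hBp)
  have hB2 : 4 ≤ tOrd Bm (auxL n hn) := aux_tB hn (-1) Bm (by simpa using hBm)
  have hC := aux_tC hn C₁ hC₁
  refine ⟨le_antisymm ?_ ?_, ?_, le_antisymm ?_ ?_⟩
  · exact iSup_le fun L => (min_le_right _ _).trans (aux_upper hn L Bp Bm hBp hBm)
  · refine le_trans ?_ (le_iSup _ (auxL n hn))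
    exact le_min (by rw [hC]; exact le_top) (le_min hB1 hB2)
  · exact top_le_iff.1 (hC ▸ le_iSup (fun L => tOrd C₁ L) (auxL n hn))
  · exact iSup_le fun L => aux_upper hn L Bp Bm hBp hBm
  · exact (le_min hB1 hB2).trans
      (le_iSup (fun L => min (tOrd Bp L) (tOrd Bm L)) (auxL n hn))

end
end

section
/- Let n ≥ 2 and let ε = ±1. Consider the curve-germ in ℝ^{2n} (coordinates (p₁,q₁,p₂,q₂,…,pₙ,qₙ), all unlisted coordinates equal to 0) f(t) = (t⁴, ε·(1/2)t¹⁰, t³, 0, …, 0) (the class E₆^{4,±} of the planar singularity E₆). Then Lt(f) = 11. In particular, together with Lt = 10 for the class E₆³, the Lagrangian tangency order distinguishes the symplectic classes E₆³ and E₆^{4,±}. -/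
noncomputable section

section
open Asymptotics Filter Topology

theorem mvBigO {E : Type*} [NormedAddCommGroup E] [NormedSpace ℝ E] (M : E → ℝ) (m : ℕ)
    (hM : Differentiable ℝ M) (h0 : M 0 = 0)
    (hD : (fun z => fderiv ℝ M z) =O[𝓝 0] (fun z => ‖z‖ ^ m)) :
    M =O[𝓝 0] (fun z => ‖z‖ ^ (m + 1)) := by
  obtain ⟨C, hC⟩ := hD.bound
  obtain ⟨r, hr, hb⟩ := Metric.eventually_nhds_iff_ball.1 hC
  refine IsBigO.of_bound C ?_
  filter_upwards [Metric.ball_mem_nhds (0 : E) hr] with z hz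
  have hz' : ‖z‖ < r := by simpa using hz
  have := (convex_closedBall (0 : E) ‖z‖).norm_image_sub_le_of_norm_fderiv_le (𝕜 := ℝ) (f := M)
    (C := C * ‖z‖ ^ m) (x := 0) (y := z) (fun x _ => hM x) ?_ (by simp) (by simp)
  · rw [h0] at this
    simp only [sub_zero] at this
    simp only [norm_pow, norm_norm]
    calc _ ≤ _ := this
      _ = _ := by ring
  · intro x hx
    have hx' : ‖x‖ ≤ ‖z‖ := by simpa using hx
    have h1 := hb x (by simpa using lt_of_le_of_lt hx' hz')
    simp only [norm_pow, norm_norm] at h1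
    have hC0 : 0 ≤ C ∨ ‖x‖ ^ m ≤ 0 := by
      by_contra! h
      have := mul_neg_of_neg_of_pos h.1 h.2
      linarith [norm_nonneg (fderiv ℝ M x)]
    rcases hC0 with h | h
    · exact h1.trans (by gcongr)
    · have h2 : ‖x‖ ^ m = 0 := le_antisymm h (by positivity)
      rw [h2] at h1
      have hxx : ‖x‖ = 0 := by
        by_contra hne
        exact absurd h2 (pow_ne_zero _ hne)
      have h3 := hb z hz
      simp only [norm_pow, norm_norm] at h3
      linarith [norm_nonneg (fderiv ℝ M z)]

theorem mvBigO2 (M Mx My : ℝ × ℝ → ℝ) (m : ℕ)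
    (hM : ∀ z, HasFDerivAt M (Mx z • ContinuousLinearMap.fst ℝ ℝ ℝ
      + My z • ContinuousLinearMap.snd ℝ ℝ ℝ) z) (h0 : M 0 = 0)
    (hx : Mx =O[𝓝 0] (fun z => ‖z‖ ^ m)) (hy : My =O[𝓝 0] (fun z => ‖z‖ ^ m)) :
    M =O[𝓝 0] (fun z => ‖z‖ ^ (m + 1)) := by
  refine mvBigO M m (fun z => (hM z).differentiableAt) h0 ?_
  have : (fun z => fderiv ℝ M z) = fun z => Mx z • ContinuousLinearMap.fst ℝ ℝ ℝ
      + My z • ContinuousLinearMap.snd ℝ ℝ ℝ := by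
    funext z; exact (hM z).fderiv
  rw [this]
  have e : ∀ (A : ℝ × ℝ → ℝ) (l : ℝ × ℝ →L[ℝ] ℝ), A =O[𝓝 0] (fun z => ‖z‖ ^ m) →
      (fun z => A z • l) =O[𝓝 0] (fun z => ‖z‖ ^ m) := by
    intro A l hA
    have := hA.smul (isBigO_refl (fun _ : ℝ × ℝ => l) (𝓝 0))
    refine this.trans ?_
    refine IsBigO.of_bound ‖l‖ (Eventually.of_forall fun z => ?_)
    simp [norm_smul, mul_comm]
  exact (e _ _ hx).add (e _ _ hy)

def DX (M : ℝ × ℝ → ℝ) : ℝ × ℝ → ℝ := fun z => fderiv ℝ M z (1, 0)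
def DY (M : ℝ × ℝ → ℝ) : ℝ × ℝ → ℝ := fun z => fderiv ℝ M z (0, 1)

abbrev Smo (M : ℝ × ℝ → ℝ) : Prop := ContDiff ℝ (⊤ : ℕ∞) M

theorem Smo.dx {M} (h : Smo M) : Smo (DX M) :=
  (h.fderiv_right (m := (⊤ : ℕ∞)) (by simp)).clm_apply contDiff_const
theorem Smo.dy {M} (h : Smo M) : Smo (DY M) :=
  (h.fderiv_right (m := (⊤ : ℕ∞)) (by simp)).clm_apply contDiff_const
theorem Smo.diff {M} (h : Smo M) : Differentiable ℝ M := h.differentiable (by simp)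

theorem Smo.hfd {M} (h : Smo M) (z : ℝ × ℝ) : HasFDerivAt M (DX M z • ContinuousLinearMap.fst ℝ ℝ ℝ
      + DY M z • ContinuousLinearMap.snd ℝ ℝ ℝ) z := by
  convert (h.diff z).hasFDerivAt using 1
  ext <;> simp [DX, DY]

theorem Smo.comm {M} (h : Smo M) : DX (DY M) = DY (DX M) := by
  funext z
  have hs : IsSymmSndFDerivAt ℝ M z :=
    (ContDiff.contDiffAt h).isSymmSndFDerivAt (by
      simp only [minSmoothness_of_isRCLikeNormedField]
      exact WithTop.coe_le_coe.2 (le_top : (2 : ℕ∞) ≤ ⊤))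
  have hd : DifferentiableAt ℝ (fderiv ℝ M) z :=
    ((h.fderiv_right (m := (⊤ : ℕ∞)) (by simp)).differentiable (by simp)) z
  have e : ∀ v w : ℝ × ℝ, fderiv ℝ (fun z => fderiv ℝ M z v) z w = fderiv ℝ (fderiv ℝ M) z w v := by
    intro v w
    rw [fderiv_clm_apply hd (by fun_prop)]
    simp
  unfold DX DY
  rw [e, e]
  exact hs _ _

theorem hfd_congr {f g : ℝ × ℝ → ℝ} {f' g' : ℝ × ℝ →L[ℝ] ℝ} {z : ℝ × ℝ}
    (h : HasFDerivAt f f' z) (h1 : ∀ w, g w = f w) (h2 : g' = f') : HasFDerivAt g g' z := by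
  have : g = f := funext h1
  rw [this, h2]; exact h

theorem polyD (a b c d e f g h i j : ℝ) (z : ℝ × ℝ) :
    HasFDerivAt (fun z : ℝ × ℝ => a + b * z.1 + c * z.2 + d / 2 * z.1 ^ 2 + e * (z.1 * z.2)
      + f / 2 * z.2 ^ 2 + g / 6 * z.1 ^ 3 + h / 2 * (z.1 ^ 2 * z.2) + i / 2 * (z.1 * z.2 ^ 2)
      + j / 6 * z.2 ^ 3)
     ((b + d * z.1 + e * z.2 + g / 2 * z.1 ^ 2 + h * (z.1 * z.2) + i / 2 * z.2 ^ 2) •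
        ContinuousLinearMap.fst ℝ ℝ ℝ
      + (c + e * z.1 + f * z.2 + h / 2 * z.1 ^ 2 + i * (z.1 * z.2) + j / 2 * z.2 ^ 2) •
        ContinuousLinearMap.snd ℝ ℝ ℝ) z := by
  have hx : HasFDerivAt (fun z : ℝ × ℝ => z.1) (ContinuousLinearMap.fst ℝ ℝ ℝ) z := hasFDerivAt_fst
  have hy : HasFDerivAt (fun z : ℝ × ℝ => z.2) (ContinuousLinearMap.snd ℝ ℝ ℝ) z := hasFDerivAt_snd
  have := (((((((((hasFDerivAt_const a z).add (hx.const_mul b)).add (hy.const_mul c)).add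
    ((hx.pow 2).const_mul (d / 2))).add ((hx.mul hy).const_mul e)).add
    ((hy.pow 2).const_mul (f / 2))).add ((hx.pow 3).const_mul (g / 6))).add
    (((hx.pow 2).mul hy).const_mul (h / 2))).add ((hx.mul (hy.pow 2)).const_mul (i / 2))).add
    ((hy.pow 3).const_mul (j / 6))
  refine hfd_congr this (fun w => by simp) ?_
  ext <;> simp <;> ring

theorem taylor0 {M} (h : Smo M) :
    (fun z => M z - M 0) =O[𝓝 0] (fun z : ℝ × ℝ => ‖z‖ ^ 1) := by
  have hb : ∀ {A}, Smo A → A =O[𝓝 0] (fun z : ℝ × ℝ => ‖z‖ ^ 0) := by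
    intro A hA
    simp only [pow_zero]
    exact hA.continuous.continuousAt.isBigO_one ℝ
  exact mvBigO2 _ (DX M) (DY M) 0 (fun z => (h.hfd z).sub_const _) (by simp) (hb h.dx) (hb h.dy)

theorem taylor1 {M} (h : Smo M) :
    (fun z => M z - (M 0 + DX M 0 * z.1 + DY M 0 * z.2)) =O[𝓝 0] (fun z : ℝ × ℝ => ‖z‖ ^ 2) := by
  refine mvBigO2 _ (fun z => DX M z - DX M 0) (fun z => DY M z - DY M 0) 1 (fun z => ?_)
    (by simp) (taylor0 h.dx) (taylor0 h.dy)
  refine hfd_congr ((h.hfd z).sub (polyD (M 0) (DX M 0) (DY M 0) 0 0 0 0 0 0 0 z)) (fun w => by simp) ?_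
  · ext <;> simp

theorem taylor2 {M} (h : Smo M) :
    (fun z => M z - (M 0 + DX M 0 * z.1 + DY M 0 * z.2 + DX (DX M) 0 / 2 * z.1 ^ 2
      + DY (DX M) 0 * (z.1 * z.2) + DY (DY M) 0 / 2 * z.2 ^ 2))
      =O[𝓝 0] (fun z : ℝ × ℝ => ‖z‖ ^ 3) := by
  refine mvBigO2 _ _ _ 2 (fun z => ?_)
    (by simp) (taylor1 h.dx) (taylor1 h.dy)
  refine hfd_congr ((h.hfd z).sub (polyD (M 0) (DX M 0) (DY M 0) (DX (DX M) 0) (DY (DX M) 0) (DY (DY M) 0) 0 0 0 0 z)) (fun w => by simp) ?_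
  · rw [h.comm]
    ext <;> simp

theorem taylor3 {M} (h : Smo M) :
    (fun z => M z - (M 0 + DX M 0 * z.1 + DY M 0 * z.2 + DX (DX M) 0 / 2 * z.1 ^ 2
      + DY (DX M) 0 * (z.1 * z.2) + DY (DY M) 0 / 2 * z.2 ^ 2
      + DX (DX (DX M)) 0 / 6 * z.1 ^ 3 + DY (DX (DX M)) 0 / 2 * (z.1 ^ 2 * z.2)
      + DY (DY (DX M)) 0 / 2 * (z.1 * z.2 ^ 2) + DY (DY (DY M)) 0 / 6 * z.2 ^ 3))
      =O[𝓝 0] (fun z : ℝ × ℝ => ‖z‖ ^ 4) := by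
  refine mvBigO2 _ _ _ 3 (fun z => ?_)
    (by simp) (taylor2 h.dx) (taylor2 h.dy)
  refine hfd_congr ((h.hfd z).sub (polyD (M 0) (DX M 0) (DY M 0) (DX (DX M) 0) (DY (DX M) 0) (DY (DY M) 0)
    (DX (DX (DX M)) 0) (DY (DX (DX M)) 0) (DY (DY (DX M)) 0) (DY (DY (DY M)) 0) z)) (fun w => by simp) ?_
  · rw [h.comm, h.dx.comm]
    ext <;> simp

theorem powO {a b : ℕ} (hab : a ≤ b) : (fun t : ℝ => t ^ b) =O[𝓝 0] (fun t => t ^ a) := by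
  obtain ⟨k, rfl⟩ := Nat.exists_eq_add_of_le hab
  have h3 : (fun t : ℝ => t ^ k) =O[𝓝 0] (fun _ => (1 : ℝ)) :=
    (continuous_pow k).continuousAt.isBigO_one ℝ
  simpa [pow_add] using (isBigO_refl (fun t : ℝ => t ^ a) (𝓝 0)).mul h3

theorem coef_zero (N : ℕ) : ∀ (c : ℕ → ℝ),
    (fun t : ℝ => ∑ i ∈ Finset.range N, c i * t ^ i) =O[𝓝 0] (fun t => t ^ N) →
    ∀ i < N, c i = 0 := by
  intro c h i
  induction i using Nat.strong_induction_on with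
  | _ i ih =>
    intro hi
    have h1 : (fun t : ℝ => ∑ i ∈ Finset.range N, c i * t ^ i) = fun t =>
        c i * t ^ i + t ^ (i+1) * ∑ k ∈ Finset.range (N - (i + 1)), c (i + 1 + k) * t ^ k := by
      funext t
      obtain ⟨k, rfl⟩ := Nat.exists_eq_add_of_le (Nat.succ_le_of_lt hi)
      rw [Finset.sum_range_add, Finset.sum_range_succ, Finset.sum_eq_zero, zero_add,
        Finset.mul_sum]
      · simp only [Nat.succ_eq_add_one, Nat.add_sub_cancel_left]
        congr 1
        refine Finset.sum_congr rfl fun x _ => by ring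
      · intro x hx
        rw [Finset.mem_range] at hx
        rw [ih x hx (by omega), zero_mul]
    rw [h1] at h
    have h2 := h.trans (powO hi)
    have h3 : (fun t : ℝ => t ^ (i+1) * ∑ k ∈ Finset.range (N - (i + 1)), c (i + 1 + k) * t ^ k)
        =O[𝓝 0] (fun t => t ^ (i + 1)) := by
      have h3 : (fun t : ℝ => ∑ k ∈ Finset.range (N - (i + 1)), c (i + 1 + k) * t ^ k)
          =O[𝓝 0] (fun _ => (1 : ℝ)) :=
        (by fun_prop : Continuous _).continuousAt.isBigO_one ℝ
      simpa using (isBigO_refl (fun t : ℝ => t ^ (i+1)) (𝓝 0)).mul h3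
    have h4 := h2.sub h3
    simp only [add_sub_cancel_right] at h4
    have h5 : (fun t : ℝ => t ^ (i+1)) =o[𝓝 0] (fun t => t ^ i) := isLittleO_pow_pow (by omega)
    have h6 := h4.trans_isLittleO h5
    by_contra hc
    have h7 : (fun t : ℝ => t ^ i) =o[𝓝 0] (fun t => t ^ i) :=
      (isLittleO_const_mul_left_iff hc).1 h6
    refine isLittleO_irrefl ?_ h7
    have h8 : ∃ᶠ x : ℝ in 𝓝[≠] 0, x ^ i ≠ 0 := by
      refine Eventually.frequently ?_
      filter_upwards [self_mem_nhdsWithin] with x hx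
      exact pow_ne_zero _ hx
    exact h8.filter_mono nhdsWithin_le_nhds

theorem curveO {M : ℝ × ℝ → ℝ} {m k : ℕ} (h : M =O[𝓝 0] (fun z : ℝ × ℝ => ‖z‖ ^ m))
    (hk : k ≤ 3 * m) : (fun t : ℝ => M (t ^ 4, t ^ 3)) =O[𝓝 0] (fun t => t ^ k) := by
  have hc : Continuous (fun t : ℝ => (t ^ 4, t ^ 3)) := by fun_prop
  have ht : Tendsto (fun t : ℝ => (t ^ 4, t ^ 3)) (𝓝 0) (𝓝 0) := by
    have := hc.tendsto 0
    have e : ((0 : ℝ) ^ 4, (0 : ℝ) ^ 3) = (0 : ℝ × ℝ) := by ext <;> simp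
    rwa [e] at this
  have h1 := h.comp_tendsto ht
  refine h1.trans ?_
  have h2 : (fun t : ℝ => (t ^ 4, t ^ 3)) =O[𝓝 0] (fun t => t ^ 3) :=
    (powO (by norm_num)).prod_left (isBigO_refl _ _)
  have h3 := h2.norm_left.pow m
  refine h3.trans ?_
  simp only [← pow_mul]
  exact powO hk

theorem curveLemma {K} (h : Smo K) (N : ℕ) (hN : N = 11 ∨ N = 12)
    (hK : (fun t : ℝ => K (t ^ 4, t ^ 3)) =O[𝓝 0] (fun t => t ^ N)) :
    (fun t : ℝ => DX K (t ^ 4, t ^ 3)) =O[𝓝 0] (fun t => t ^ (N - 4)) ∧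
    (fun t : ℝ => DY K (t ^ 4, t ^ 3)) =O[𝓝 0] (fun t => t ^ (N - 4)) := by
  let c : ℕ → ℝ := fun i => match i with
    | 0 => K 0
    | 3 => DY K 0
    | 4 => DX K 0
    | 6 => DY (DY K) 0 / 2
    | 7 => DY (DX K) 0
    | 8 => DX (DX K) 0 / 2
    | 9 => DY (DY (DY K)) 0 / 6
    | 10 => DY (DY (DX K)) 0 / 2
    | 11 => DY (DX (DX K)) 0 / 2
    | 12 => DX (DX (DX K)) 0 / 6
    | _ => 0
  have h1 := curveO (taylor3 h) (k := N) (by omega)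
  have h2 := hK.sub h1
  have h3 : (fun t : ℝ => ∑ i ∈ Finset.range 13, c i * t ^ i) =O[𝓝 0] (fun t => t ^ N) := by
    refine h2.congr_left fun t => ?_
    simp only [Finset.sum_range_succ, Finset.sum_range_zero, c]
    ring
  have h4 : (fun t : ℝ => ∑ i ∈ Finset.Ico N 13, c i * t ^ i) =O[𝓝 0] (fun t => t ^ N) := by
    refine IsBigO.fun_sum fun i hi => ?_
    exact (powO (Finset.mem_Ico.1 hi).1).const_mul_left _
  have h5 : (fun t : ℝ => ∑ i ∈ Finset.range N, c i * t ^ i) =O[𝓝 0] (fun t => t ^ N) := by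
    refine (h3.sub h4).congr_left fun t => ?_
    rw [← Finset.sum_range_add_sum_Ico _ (show N ≤ 13 by omega)]
    ring
  have h6 := coef_zero N c h5
  have c3 : DY K 0 = 0 := h6 3 (by omega)
  have c4 : DX K 0 = 0 := h6 4 (by omega)
  have c6 : DY (DY K) 0 = 0 := by have := h6 6 (by omega); simp only [c] at this; linarith
  have c7 : DY (DX K) 0 = 0 := h6 7 (by omega)
  have c8 : DX (DX K) 0 = 0 := by have := h6 8 (by omega); simp only [c] at this; linarith
  have c9 : DY (DY (DY K)) 0 = 0 := by have := h6 9 (by omega); simp only [c] at this; linarith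
  have c10 : DY (DY (DX K)) 0 = 0 := by have := h6 10 (by omega); simp only [c] at this; linarith
  have c11 : N = 12 → DY (DX (DX K)) 0 = 0 := by
    intro hN
    have := h6 11 (by omega); simp only [c] at this; linarith
  have h7 := curveO (taylor2 h.dx) (k := N - 4) (by omega)
  have h8 := curveO (taylor2 h.dy) (k := N - 4) (by omega)
  simp only [h.comm, h.dx.comm, c3, c4, c6, c7, c8, c9, c10] at h7 h8
  have e8 : (fun t : ℝ => t ^ 8) =O[𝓝 0] (fun t => t ^ (N - 4)) := powO (by omega)
  constructor
  · have e7 : (fun t : ℝ => DY (DX (DX K)) 0 * t ^ 7) =O[𝓝 0] (fun t => t ^ (N - 4)) := by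
      rcases hN with rfl | rfl
      · exact (isBigO_refl _ _).const_mul_left _
      · rw [c11 rfl]; simpa using isBigO_zero _ _
    refine ((h7.add e7).add (e8.const_mul_left (DX (DX (DX K)) 0 / 2))).congr_left fun t => ?_
    ring
  · refine (h8.add (e8.const_mul_left (DY (DX (DX K)) 0 / 2))).congr_left fun t => ?_
    ring

theorem vanishO (h : ℝ → ℝ) (hs : ContDiff ℝ (⊤ : ℕ∞) h) (h0 : h 0 = 0) (N : ℕ)
    (hd : ∀ m, 1 ≤ m → m < N → iteratedDeriv m h 0 = 0) : h =O[𝓝 0] (fun t => t ^ N) := by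
  have h1 := taylor_isLittleO_univ (n := N) (x₀ := 0)
    (hs.of_le (WithTop.coe_le_coe.2 (le_top : (N : ℕ∞) ≤ ⊤)))
  simp only [sub_zero] at h1
  have h2 : ∀ x, taylorWithinEval h N Set.univ 0 x =
      ((N.factorial : ℝ)⁻¹ * iteratedDeriv N h 0) * x ^ N := by
    intro x
    rw [taylor_within_apply, Finset.sum_range_succ, Finset.sum_eq_zero]
    · simp [iteratedDerivWithin_univ]; ring
    · intro k hk
      rw [Finset.mem_range] at hk
      rw [iteratedDerivWithin_univ]
      rcases Nat.eq_zero_or_pos k with rfl | hk0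
      · simp [h0]
      · simp [hd k hk0 hk]
  refine (h1.isBigO.add ((isBigO_refl (fun t : ℝ => t ^ N) (𝓝 0)).const_mul_left
    ((N.factorial : ℝ)⁻¹ * iteratedDeriv N h 0))).congr_left fun t => ?_
  rw [h2]; ring

open ContinuousLinearMap in
theorem solve {E F : Type*} [NormedAddCommGroup E] [NormedSpace ℝ E] [CompleteSpace E]
    [NormedAddCommGroup F] [NormedSpace ℝ F] [CompleteSpace F] (A : E →L[ℝ] F)
    (hA : A.range = ⊤) : ∃ C : ℝ, 0 < C ∧ ∃ c : NNReal, 0 < c ∧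
      ∀ (φ : E → F) (s : Set E) (b : E), ApproximatesLinearOn φ A s c →
        Metric.closedBall b (C * ‖φ b‖) ⊆ s → ∃ z ∈ s, φ z = 0 ∧ ‖z - b‖ ≤ C * ‖φ b‖ := by
  let S := A.nonlinearRightInverseOfSurjective hA
  have hS : 0 < S.nnnorm := A.nonlinearRightInverseOfSurjective_nnnorm_pos hA
  have hS' : (0 : ℝ) < S.nnnorm := hS
  refine ⟨2 * S.nnnorm, by positivity, S.nnnorm⁻¹ / 2, by positivity, ?_⟩
  intro φ s b hφ hs
  have := hφ.surjOn_closedBall_of_nonlinearRightInverse S (by positivity) hs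
  obtain ⟨z, hz, hz0⟩ := this (show (0 : F) ∈ _ by
    rw [mem_closedBall_iff_norm]
    simp only [zero_sub, norm_neg]
    push_cast
    apply le_of_eq
    field_simp
    ring)
  exact ⟨z, hs hz, hz0, mem_closedBall_iff_norm.1 hz⟩

theorem surj_of_li {E : Type*} [NormedAddCommGroup E] [NormedSpace ℝ E] {n : ℕ}
    (l : Fin n → (E →L[ℝ] ℝ)) (h : LinearIndependent ℝ l) :
    (ContinuousLinearMap.pi l).range = ⊤ := by
  by_contra hne
  obtain ⟨φ, hφ, hφ0⟩ := Submodule.exists_le_ker_of_lt_top _ (lt_top_iff_ne_top.2 hne)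
  apply hφ
  have h1 : ∀ i, φ (fun j => if i = j then 1 else 0) = 0 := by
    rw [Fintype.linearIndependent_iff] at h
    apply h
    ext x
    have : φ (ContinuousLinearMap.pi l x) = 0 := hφ0 ⟨x, rfl⟩
    rw [LinearMap.pi_apply_eq_sum_univ φ] at this
    simpa [mul_comm] using this
  refine LinearMap.ext fun y => ?_
  rw [LinearMap.pi_apply_eq_sum_univ φ]
  simp [h1]

theorem geom {E F : Type*} [NormedAddCommGroup E] [NormedSpace ℝ E] [CompleteSpace E]
    [NormedAddCommGroup F] [NormedSpace ℝ F] [CompleteSpace F] (HH : E → F)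
    (hH : ContDiff ℝ (⊤ : ℕ∞) HH) (hA : (fderiv ℝ HH 0).range = ⊤)
    (Ω : E → E → ℝ) (hsub1 : ∀ u u' v, Ω (u - u') v = Ω u v - Ω u' v)
    (hsub2 : ∀ u v v', Ω u (v - v') = Ω u v - Ω u v')
    (B : ℝ) (hB : 0 ≤ B) (hΩ : ∀ u v, |Ω u v| ≤ B * (‖u‖ * ‖v‖))
    (U : Set E) (hU : U ∈ 𝓝 (0 : E))
    (hL : ∀ x ∈ U, HH x = 0 → ∀ u v, fderiv ℝ HH x u = 0 → fderiv ℝ HH x v = 0 → Ω u v = 0)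
    (k : ℕ) (p u v : ℝ → E) (hp : Tendsto p (𝓝 0) (𝓝 0))
    (hu : u =O[𝓝 0] (fun _ => (1 : ℝ))) (hv : v =O[𝓝 0] (fun _ => (1 : ℝ)))
    (h0 : (fun t => HH (p t)) =O[𝓝 0] (fun t : ℝ => t ^ k)) (hp0 : Tendsto (fun t => HH (p t)) (𝓝 0) (𝓝 0))
    (h1 : (fun t => fderiv ℝ HH (p t) (u t)) =O[𝓝 0] (fun t : ℝ => t ^ k))
    (h2 : (fun t => fderiv ℝ HH (p t) (v t)) =O[𝓝 0] (fun t : ℝ => t ^ k)) :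
    (fun t => Ω (u t) (v t)) =O[𝓝 0] (fun t : ℝ => t ^ k) := by
  obtain ⟨C, hC, c, hc, hsol⟩ := solve (fderiv ℝ HH 0) hA
  have hst : HasStrictFDerivAt HH (fderiv ℝ HH 0) 0 :=
    hH.contDiffAt.hasStrictFDerivAt (by simp)
  obtain ⟨s, hs, happ⟩ := hst.approximates_deriv_on_nhds (c := c) (Or.inr hc)
  have hD : ContDiff ℝ (⊤ : ℕ∞) (fderiv ℝ HH) := hH.fderiv_right (by simp)
  obtain ⟨K, s2, hs2, hlip⟩ := 
    ((hD.of_le (by simp : (1 : WithTop ℕ∞) ≤ _)).contDiffAt (x := 0)).exists_lipschitzOnWith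
  have hs3 : {z | ‖fderiv ℝ HH z - fderiv ℝ HH 0‖ < c} ∈ 𝓝 (0 : E) := by
    have hcont : Continuous fun z => ‖fderiv ℝ HH z - fderiv ℝ HH 0‖ :=
      (hD.continuous.sub continuous_const).norm
    refine hcont.tendsto 0 (Iio_mem_nhds ?_)
    simpa using hc
  obtain ⟨r, hr, hball⟩ := Metric.mem_nhds_iff.1 (inter_mem (inter_mem hs hs2) (inter_mem hs3 hU))
  obtain ⟨a, ha, hab⟩ := h0.exists_pos
  obtain ⟨d1, hd1, hdb1⟩ := h1.exists_pos
  obtain ⟨d2, hd2, hdb2⟩ := h2.exists_pos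
  obtain ⟨b1, hb1, hbb1⟩ := hu.exists_pos
  obtain ⟨b2, hb2, hbb2⟩ := hv.exists_pos
  have hsmall : ∀ᶠ t in 𝓝 (0 : ℝ), ‖p t‖ + C * ‖HH (p t)‖ < r := by
    have : Tendsto (fun t => ‖p t‖ + C * ‖HH (p t)‖) (𝓝 0) (𝓝 (‖(0 : E)‖ + C * ‖(0 : F)‖)) :=
      hp.norm.add (hp0.norm.const_mul C)
    refine this (Iio_mem_nhds ?_)
    simpa using hr
  have ht1 : ∀ᶠ t in 𝓝 (0 : ℝ), |t| < 1 := by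
    have : Tendsto (fun t : ℝ => |t|) (𝓝 0) (𝓝 |0|) := continuous_abs.tendsto 0
    refine this (Iio_mem_nhds ?_)
    simp
  set e1 := C * (d1 + K * (C * a) * b1) with he1
  set e2 := C * (d2 + K * (C * a) * b2) with he2
  have he1p : 0 ≤ e1 := by positivity
  have he2p : 0 ≤ e2 := by positivity
  refine IsBigO.of_bound (B * (e1 * b2 + (b1 + e1) * e2)) ?_
  filter_upwards [hsmall, ht1, hab.bound, hdb1.bound, hdb2.bound, hbb1.bound, hbb2.bound] with
    t htr ht hHt hdu hdv hut hvt
  simp only [norm_pow, Real.norm_eq_abs, norm_one, mul_one] at hHt hdu hdv hut hvt ⊢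
  set w := |t| ^ k with hw
  have hw0 : 0 ≤ w := by positivity
  have hw1 : w ≤ 1 := pow_le_one₀ (abs_nonneg t) ht.le
  have hsubs : Metric.closedBall (p t) (C * ‖HH (p t)‖) ⊆ Metric.ball 0 r := by
    intro x hx
    rw [mem_closedBall_iff_norm] at hx
    rw [mem_ball_zero_iff]
    calc ‖x‖ = ‖(x - p t) + p t‖ := by simp
      _ ≤ ‖x - p t‖ + ‖p t‖ := norm_add_le _ _
      _ < r := by linarith
  obtain ⟨z, hz, hz0, hzp⟩ := hsol HH (Metric.ball 0 r) (p t)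
    (happ.mono_set (fun x hx => (hball hx).1.1)) hsubs
  have hpb : p t ∈ Metric.ball (0 : E) r := hsubs (by simp; positivity)
  have hzp' : ‖z - p t‖ ≤ C * a * w := by
    calc _ ≤ _ := hzp
      _ ≤ C * (a * w) := by gcongr
      _ = _ := by ring
  have hlz : ‖fderiv ℝ HH z - fderiv ℝ HH (p t)‖ ≤ K * (C * a * w) := by
    have := hlip.norm_sub_le (hball hz).1.2 (hball hpb).1.2
    exact this.trans (by gcongr)
  have key : ∀ (x : E) (d b : ℝ), 0 ≤ b → ‖fderiv ℝ HH (p t) x‖ ≤ d * w → ‖x‖ ≤ b →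
      ∃ x', fderiv ℝ HH z x' = 0 ∧ ‖x' - x‖ ≤ C * (d + K * (C * a) * b) * w := by
    intro x d b hb hx hxb
    have h3 : ‖fderiv ℝ HH z x‖ ≤ (d + K * (C * a) * b) * w := by
      have : fderiv ℝ HH z x = fderiv ℝ HH (p t) x + (fderiv ℝ HH z - fderiv ℝ HH (p t)) x := by
        simp
      rw [this]
      calc _ ≤ ‖fderiv ℝ HH (p t) x‖ + ‖(fderiv ℝ HH z - fderiv ℝ HH (p t)) x‖ := norm_add_le _ _
        _ ≤ d * w + (K * (C * a * w)) * b := by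
          gcongr
          exact (ContinuousLinearMap.le_opNorm _ _).trans (by gcongr)
        _ = _ := by ring
    have happ2 : ApproximatesLinearOn (fderiv ℝ HH z) (fderiv ℝ HH 0) Set.univ c := by
      intro x _ y _
      have : fderiv ℝ HH z x - fderiv ℝ HH z y - fderiv ℝ HH 0 (x - y)
        = (fderiv ℝ HH z - fderiv ℝ HH 0) (x - y) := by simp
      rw [this]
      refine (ContinuousLinearMap.le_opNorm _ _).trans ?_
      gcongr
      exact (hball hz).2.1.le
    obtain ⟨x', -, hx0, hxx⟩ := hsol (fderiv ℝ HH z) Set.univ x happ2 (Set.subset_univ _)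
    refine ⟨x', hx0, hxx.trans ?_⟩
    rw [mul_assoc]
    gcongr
  obtain ⟨u', hu0, hu'⟩ := key (u t) d1 b1 hb1.le hdu hut
  obtain ⟨v', hv0, hv'⟩ := key (v t) d2 b2 hb2.le hdv hvt
  rw [← he1] at hu'
  rw [← he2] at hv'
  have hzero := hL z (hball hz).2.2 hz0 u' v' hu0 hv0
  have heq : Ω (u t) (v t) = - Ω (u' - u t) (v t) - Ω u' (v' - v t) := by
    rw [hsub1, hsub2, hzero]; ring
  have hu'n : ‖u'‖ ≤ b1 + e1 := by
    calc ‖u'‖ = ‖u t + (u' - u t)‖ := by simp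
      _ ≤ ‖u t‖ + ‖u' - u t‖ := norm_add_le _ _
      _ ≤ b1 + e1 * 1 := by gcongr; exact hu'.trans (by gcongr)
      _ = _ := by ring
  rw [heq]
  calc |- Ω (u' - u t) (v t) - Ω u' (v' - v t)| ≤ |Ω (u' - u t) (v t)| + |Ω u' (v' - v t)| := by
        have := abs_sub (- Ω (u' - u t) (v t)) (Ω u' (v' - v t))
        rwa [abs_neg] at this
    _ ≤ B * (‖u' - u t‖ * ‖v t‖) + B * (‖u'‖ * ‖v' - v t‖) := add_le_add (hΩ _ _) (hΩ _ _)
    _ ≤ B * ((e1 * w) * b2) + B * ((b1 + e1) * (e2 * w)) := by gcongr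
    _ = _ := by ring

def Fm (n : ℕ) (c d : ℝ) (z : ℝ × ℝ) (j : Fin (2 * n)) : ℝ :=
  if (j : ℕ) = 0 then z.1 else if (j : ℕ) = 1 then c / 3 * z.2 ^ 3 + d / 2 * (z.1 * z.2 ^ 2)
  else if (j : ℕ) = 2 then z.2 else 0
def Fu (n : ℕ) (d : ℝ) (z : ℝ × ℝ) (j : Fin (2 * n)) : ℝ :=
  if (j : ℕ) = 0 then 1 else if (j : ℕ) = 1 then d / 2 * z.2 ^ 2 else 0
def Fv (n : ℕ) (c d : ℝ) (z : ℝ × ℝ) (j : Fin (2 * n)) : ℝ :=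
  if (j : ℕ) = 0 then 0 else if (j : ℕ) = 1 then c * z.2 ^ 2 + d * (z.1 * z.2)
  else if (j : ℕ) = 2 then 1 else 0

theorem Fm_smooth (n : ℕ) (c d : ℝ) : ContDiff ℝ (⊤ : ℕ∞) (Fm n c d) := by
  refine contDiff_pi.2 fun j => ?_
  unfold Fm
  split_ifs <;> fun_prop

theorem Fu_cont (n : ℕ) (d : ℝ) : Continuous (Fu n d) := by
  refine continuous_pi fun j => ?_
  unfold Fu
  split_ifs <;> fun_prop

theorem Fv_cont (n : ℕ) (c d : ℝ) : Continuous (Fv n c d) := by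
  refine continuous_pi fun j => ?_
  unfold Fv
  split_ifs <;> fun_prop

theorem Fm_deriv (n : ℕ) (c d : ℝ) (z : ℝ × ℝ) : HasFDerivAt (Fm n c d)
    (ContinuousLinearMap.pi fun j => Fu n d z j • ContinuousLinearMap.fst ℝ ℝ ℝ
      + Fv n c d z j • ContinuousLinearMap.snd ℝ ℝ ℝ) z := by
  refine hasFDerivAt_pi.2 fun j => ?_
  by_cases h0 : (j : ℕ) = 0
  · refine hfd_congr (polyD 0 1 0 0 0 0 0 0 0 0 z) (fun w => ?_) ?_
    · simp [Fm, h0]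
    · ext <;> simp [Fu, Fv, h0]
  by_cases h1 : (j : ℕ) = 1
  · refine hfd_congr (polyD 0 0 0 0 0 0 0 0 d (2 * c) z) (fun w => ?_) ?_
    · simp [Fm, h1]; ring
    · ext <;> simp [Fu, Fv, h1]; ring
  by_cases h2 : (j : ℕ) = 2
  · refine hfd_congr (polyD 0 0 1 0 0 0 0 0 0 0 z) (fun w => ?_) ?_
    · simp [Fm, h2]
    · ext <;> simp [Fu, Fv, h2]
  · refine hfd_congr (polyD 0 0 0 0 0 0 0 0 0 0 z) (fun w => ?_) ?_
    · simp [Fm, h0, h1, h2]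
    · ext <;> simp [Fu, Fv, h0, h1, h2]

theorem symp_uv (n : ℕ) (hn : 2 ≤ n) (c d : ℝ) (z : ℝ × ℝ) :
    stdSymp n (Fu n d z) (Fv n c d z) = c * z.2 ^ 2 + d * (z.1 * z.2) := by
  obtain ⟨m, rfl⟩ := Nat.exists_eq_add_of_le' hn
  unfold stdSymp
  rw [Fin.sum_univ_succ, Fin.sum_univ_succ, Finset.sum_eq_zero]
  · simp [Fu, Fv]
  · intro i _
    simp [Fu, Fv]

theorem symp_bound (n : ℕ) (u v : Fin (2 * n) → ℝ) :
    |stdSymp n u v| ≤ (2 * n) * (‖u‖ * ‖v‖) := by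
  unfold stdSymp
  refine (Finset.abs_sum_le_sum_abs _ _).trans ?_
  have : ∀ i ∈ (Finset.univ : Finset (Fin n)),
    |u ⟨2 * i.val, by have := i.isLt; omega⟩ * v ⟨2 * i.val + 1, by have := i.isLt; omega⟩ -
     u ⟨2 * i.val + 1, by have := i.isLt; omega⟩ * v ⟨2 * i.val, by have := i.isLt; omega⟩|
     ≤ 2 * (‖u‖ * ‖v‖) := by
    intro i _
    refine (abs_sub _ _).trans ?_
    rw [abs_mul, abs_mul, two_mul (‖u‖ * ‖v‖)]
    have hu : ∀ j, |u j| ≤ ‖u‖ := fun j => norm_le_pi_norm u j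
    have hv : ∀ j, |v j| ≤ ‖v‖ := fun j => norm_le_pi_norm v j
    exact add_le_add (mul_le_mul (hu _) (hv _) (abs_nonneg _) (norm_nonneg _))
      (mul_le_mul (hu _) (hv _) (abs_nonneg _) (norm_nonneg _))
  refine (Finset.sum_le_sum this).trans (le_of_eq ?_)
  simp; ring

theorem upper (n : ℕ) (hn : 2 ≤ n) (L : LagrangianGerm n) (c d : ℝ) (N : ℕ)
    (hN : N = 11 ∨ N = 12)
    (hd : ∀ i, ∀ k, 1 ≤ k → k < N →
      iteratedDeriv k (fun t : ℝ => L.H i (Fm n c d (t ^ 4, t ^ 3))) 0 = 0) :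
    (fun t : ℝ => c * t ^ 6 + d * t ^ 7) =O[𝓝 0] (fun t => t ^ (N - 4)) := by
  have hF0 : Fm n c d 0 = 0 := by funext j; simp [Fm]
  have hcur : Continuous (fun t : ℝ => (t ^ 4, t ^ 3)) := by fun_prop
  have hcur0 : ((0 : ℝ) ^ 4, (0 : ℝ) ^ 3) = (0 : ℝ × ℝ) := by ext <;> simp
  have hKs : ∀ i, Smo (fun z => L.H i (Fm n c d z)) := fun i => (L.smooth i).comp (Fm_smooth n c d)
  have hKO : ∀ i, (fun t : ℝ => L.H i (Fm n c d (t ^ 4, t ^ 3))) =O[𝓝 0] (fun t => t ^ N) := by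
    intro i
    refine vanishO _ ?_ ?_ N (hd i)
    · exact (hKs i).comp (by fun_prop : ContDiff ℝ (⊤ : ℕ∞) fun t : ℝ => (t ^ 4, t ^ 3))
    · simp only [hcur0, hF0, L.zero_at_zero]
  have hch : ∀ i z, HasFDerivAt (fun z => L.H i (Fm n c d z)) ((fderiv ℝ (L.H i) (Fm n c d z)).comp
      (ContinuousLinearMap.pi fun j => Fu n d z j • ContinuousLinearMap.fst ℝ ℝ ℝ
      + Fv n c d z j • ContinuousLinearMap.snd ℝ ℝ ℝ)) z := fun i z =>
    (((L.smooth i).differentiable (by simp)) _).hasFDerivAt.comp z (Fm_deriv n c d z)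
  have hdx : ∀ i z, DX (fun z => L.H i (Fm n c d z)) z = fderiv ℝ (L.H i) (Fm n c d z) (Fu n d z) := by
    intro i z
    unfold DX
    rw [(hch i z).fderiv, ContinuousLinearMap.comp_apply]
    congr 1
    funext j
    simp
  have hdy : ∀ i z, DY (fun z => L.H i (Fm n c d z)) z = fderiv ℝ (L.H i) (Fm n c d z) (Fv n c d z) := by
    intro i z
    unfold DY
    rw [(hch i z).fderiv, ContinuousLinearMap.comp_apply]
    congr 1
    funext j
    simp
  have hcl := fun i => curveLemma (hKs i) N hN (hKO i)
  let HH : (Fin (2 * n) → ℝ) → (Fin n → ℝ) := fun x i => L.H i x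
  have hHs : ContDiff ℝ (⊤ : ℕ∞) HH := contDiff_pi.2 L.smooth
  have hHd : ∀ x, fderiv ℝ HH x = ContinuousLinearMap.pi fun i => fderiv ℝ (L.H i) x := fun x =>
    fderiv_pi fun i => ((L.smooth i).differentiable (by simp)) x
  obtain ⟨U, hUo, hU0, hUL⟩ := L.lagrangian
  have hg := geom HH hHs ?_ (stdSymp n) ?_ ?_ (2 * n) (by positivity) (symp_bound n) U
    (hUo.mem_nhds hU0) ?_ (N - 4) (fun t => Fm n c d (t ^ 4, t ^ 3)) (fun t => Fu n d (t ^ 4, t ^ 3))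
    (fun t => Fv n c d (t ^ 4, t ^ 3)) ?_ ?_ ?_ ?_ ?_ ?_ ?_
  · refine hg.congr_left fun t => ?_
    rw [symp_uv n hn]
    ring
  · rw [hHd]
    exact surj_of_li _ (hUL 0 hU0 L.zero_at_zero).1
  · intro u u' v
    simp only [stdSymp, ← Finset.sum_sub_distrib, Pi.sub_apply]
    exact Finset.sum_congr rfl fun i _ => by ring
  · intro u u' v
    simp only [stdSymp, ← Finset.sum_sub_distrib, Pi.sub_apply]
    exact Finset.sum_congr rfl fun i _ => by ring
  · intro x hx hx0 u v hu hv
    rw [hHd] at hu hv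
    exact (hUL x hx (fun i => congrFun hx0 i)).2 u v (fun i => congrFun hu i) (fun i => congrFun hv i)
  · have := ((Fm_smooth n c d).continuous.comp hcur).tendsto 0
    simpa only [Function.comp_def, hcur0, hF0] using this
  · exact ((Fu_cont n d).comp hcur).continuousAt.isBigO_one ℝ
  · exact ((Fv_cont n c d).comp hcur).continuousAt.isBigO_one ℝ
  · refine isBigO_pi.2 fun i => ?_
    exact (hKO i).trans (powO (by omega))
  · have := (hHs.continuous.comp ((Fm_smooth n c d).continuous.comp hcur)).tendsto 0
    have h0 : HH 0 = 0 := funext L.zero_at_zero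
    simpa only [Function.comp_def, hcur0, hF0, h0] using this
  · refine isBigO_pi.2 fun i => ?_
    refine (hcl i).1.congr_left fun t => ?_
    rw [hdx, hHd]; rfl
  · refine isBigO_pi.2 fun i => ?_
    refine (hcl i).2.congr_left fun t => ?_
    rw [hdy, hHd]; rfl

theorem tOrd_vanish {n : ℕ} {f : ℝ → Fin (2 * n) → ℝ} {L : LagrangianGerm n} {N : ℕ}
    (h : (N : ℕ∞) ≤ tOrd f L) (i : Fin n) (k : ℕ) (h1 : 1 ≤ k) (hk : k < N) :
    iteratedDeriv k (fun t => L.H i (f t)) 0 = 0 := by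
  by_contra hne
  have h2 : tOrd f L ≤ vanishOrder (fun t => L.H i (f t)) := iInf_le _ i
  have h3 : vanishOrder (fun t => L.H i (f t)) ≤ (k : ℕ∞) := sInf_le ⟨k, rfl, h1, hne⟩
  have := (h.trans h2).trans h3
  rw [Nat.cast_le] at this
  omega

theorem upper_f (n : ℕ) (hn : 2 ≤ n) (L : LagrangianGerm n) (d : ℝ) (hd : d ≠ 0) :
    tOrd (fun t : ℝ => Fm n 0 d (t ^ 4, t ^ 3)) L ≤ 11 := by
  by_contra! h
  have h12 : ((12 : ℕ) : ℕ∞) ≤ tOrd (fun t : ℝ => Fm n 0 d (t ^ 4, t ^ 3)) L := by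
    have := Order.add_one_le_of_lt h
    exact this
  have := upper n hn L 0 d 12 (Or.inr rfl) (fun i k h1 hk => tOrd_vanish h12 i k h1 hk)
  have h2 := coef_zero 8 (fun i => if i = 7 then d else 0)
    (this.congr_left fun t => by simp [Finset.sum_range_succ]) 7 (by norm_num)
  simp at h2
  exact hd h2

theorem upper_g (n : ℕ) (hn : 2 ≤ n) (L : LagrangianGerm n) (d : ℝ) :
    tOrd (fun t : ℝ => Fm n 1 d (t ^ 4, t ^ 3)) L ≤ 10 := by
  by_contra! h
  have h12 : ((11 : ℕ) : ℕ∞) ≤ tOrd (fun t : ℝ => Fm n 1 d (t ^ 4, t ^ 3)) L := by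
    have := Order.add_one_le_of_lt h
    exact this
  have := upper n hn L 1 d 11 (Or.inl rfl) (fun i k h1 hk => tOrd_vanish h12 i k h1 hk)
  have h3 : (fun t : ℝ => 1 * t ^ 6) =O[𝓝 0] (fun t => t ^ 7) := by
    refine (this.sub ((isBigO_refl (fun t : ℝ => t ^ 7) (𝓝 0)).const_mul_left d)).congr_left
      fun t => by ring
  have h2 := coef_zero 7 (fun i => if i = 6 then 1 else 0)
    (h3.congr_left fun t => by simp [Finset.sum_range_succ]) 6 (by norm_num)
  simp at h2

def lowH (m : ℕ) (e : ℝ) (i : Fin (m + 2)) (x : Fin (2 * (m + 2)) → ℝ) : ℝ :=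
  x ⟨2 * i.val + 1, by have := i.isLt; omega⟩ -
    (if i.val = 0 then e / 2 * (x ⟨0, by omega⟩ * x ⟨2, by omega⟩ ^ 2)
     else if i.val = 1 then e / 2 * (x ⟨0, by omega⟩ ^ 2 * x ⟨2, by omega⟩) else 0)

def lowD (m : ℕ) (e : ℝ) (i : Fin (m + 2)) (x u : Fin (2 * (m + 2)) → ℝ) : ℝ :=
  u ⟨2 * i.val + 1, by have := i.isLt; omega⟩ -
    (if i.val = 0 then e / 2 * (u ⟨0, by omega⟩ * x ⟨2, by omega⟩ ^ 2
        + 2 * x ⟨0, by omega⟩ * x ⟨2, by omega⟩ * u ⟨2, by omega⟩)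
     else if i.val = 1 then e / 2 * (2 * x ⟨0, by omega⟩ * x ⟨2, by omega⟩ * u ⟨0, by omega⟩
        + x ⟨0, by omega⟩ ^ 2 * u ⟨2, by omega⟩) else 0)

theorem lowH_deriv (m : ℕ) (e : ℝ) (i : Fin (m + 2)) (x u : Fin (2 * (m + 2)) → ℝ) :
    fderiv ℝ (lowH m e i) x u = lowD m e i x u := by
  have hp : ∀ j : Fin (2 * (m + 2)), HasFDerivAt (fun y : Fin (2 * (m + 2)) → ℝ => y j)
      (ContinuousLinearMap.proj (R := ℝ) (φ := fun _ => ℝ) j) x := fun j => hasFDerivAt_apply j x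
  by_cases h0 : i.val = 0
  · have := (hp ⟨2 * i.val + 1, by have := i.isLt; omega⟩).sub
      (((hp ⟨0, by omega⟩).mul ((hp ⟨2, by omega⟩).pow 2)).const_mul (e / 2))
    have h2 := this.congr_of_eventuallyEq (f₁ := lowH m e i)
      (Eventually.of_forall fun y => by simp [lowH, h0])
    rw [h2.fderiv]
    simp [lowD, h0]
    ring
  by_cases h1 : i.val = 1
  · have := (hp ⟨2 * i.val + 1, by have := i.isLt; omega⟩).sub
      ((((hp ⟨0, by omega⟩).pow 2).mul (hp ⟨2, by omega⟩)).const_mul (e / 2))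
    have h2 := this.congr_of_eventuallyEq (f₁ := lowH m e i)
      (Eventually.of_forall fun y => by simp [lowH, h1])
    rw [h2.fderiv]
    simp [lowD, h1]
    ring
  · have := (hp ⟨2 * i.val + 1, by have := i.isLt; omega⟩)
    have h2 := this.congr_of_eventuallyEq (f₁ := lowH m e i)
      (Eventually.of_forall fun y => by simp [lowH, h0, h1])
    rw [h2.fderiv]
    simp [lowD, h0, h1]

def lowL (m : ℕ) (e : ℝ) : LagrangianGerm (m + 2) where
  H := lowH m e
  smooth i := by
    unfold lowH
    split_ifs <;> fun_prop
  zero_at_zero i := by simp [lowH]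
  lagrangian := by
    refine ⟨Set.univ, isOpen_univ, trivial, fun x _ _ => ⟨?_, ?_⟩⟩
    · rw [Fintype.linearIndependent_iff]
      intro g hg k
      have h1 := congrArg (fun l => l (fun j => if (j : ℕ) = 2 * k.val + 1 then 1 else 0)) hg
      simp only [ContinuousLinearMap.sum_apply, ContinuousLinearMap.smul_apply, lowH_deriv] at h1
      rw [Finset.sum_eq_single k] at h1
      · simpa [lowD] using h1
      · intro i _ hik
        have : i.val ≠ k.val := fun h => hik (Fin.ext h)
        simp [lowD, this]
      · simp
    · intro u v hu hv
      simp only [lowH_deriv] at hu hv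
      have hu0 := hu 0
      have hu1 := hu 1
      have hv0 := hv 0
      have hv1 := hv 1
      unfold stdSymp
      rw [Fin.sum_univ_succ, Fin.sum_univ_succ, Finset.sum_eq_zero]
      · simp [lowD, sub_eq_zero] at hu0 hu1 hv0 hv1 ⊢
        rw [hu0, hu1, hv0, hv1]
        ring
      · intro i _
        have hui := hu i.succ.succ
        have hvi := hv i.succ.succ
        simp [lowD] at hui hvi ⊢
        rw [hui, hvi]
        ring

theorem lower (n : ℕ) (hn : 2 ≤ n) (d : ℝ) :
    11 ≤ Lt1 (fun t : ℝ => Fm n 0 d (t ^ 4, t ^ 3)) := by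
  obtain ⟨m, rfl⟩ := Nat.exists_eq_add_of_le' hn
  refine le_trans ?_ (le_iSup _ (lowL m d))
  refine le_iInf fun i => ?_
  refine le_sInf ?_
  rintro k ⟨j, rfl, hj, hne⟩
  by_contra! hlt
  have hj11 : j < 11 := by exact_mod_cast hlt
  apply hne
  have hfun : ∃ a : ℝ, (fun t : ℝ => (lowL m d).H i (Fm (m + 2) 0 d (t ^ 4, t ^ 3))) =
      fun t => a * t ^ 11 := by
    by_cases h0 : i.val = 0
    · refine ⟨0, funext fun t => ?_⟩
      simp [lowL, lowH, Fm, h0]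
    by_cases h1 : i.val = 1
    · refine ⟨-(d / 2), funext fun t => ?_⟩
      simp only [lowL, lowH, Fm, h1]
      norm_num
      exact Or.inl (by ring)
    · refine ⟨0, funext fun t => ?_⟩
      have e2 : 2 * i.val + 1 ≠ 2 := by omega
      simp [lowL, lowH, Fm, h0, h1, e2]
  obtain ⟨a, ha⟩ := hfun
  rw [ha, iteratedDeriv_const_mul_field, iteratedDeriv_pow]
  simp
  omega

end

/-- The Lagrangian tangency order of the class `E₆⁴±` of the planar singularity `E₆` is `11`;
in particular the Lagrangian tangency order distinguishes the symplectic classes `E₆³`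
(where it equals `10`) and `E₆⁴±`. -/
theorem E6_4pm_lagrangian_tangency_order
    (n : ℕ) (hn : 2 ≤ n) (ε : ℝ) (hε : ε = 1 ∨ ε = -1)
    (f : ℝ → Fin (2 * n) → ℝ)
    (hf : f = fun (t : ℝ) (j : Fin (2 * n)) => if (j : ℕ) = 0 then t ^ 4 else if (j : ℕ) = 1 then ε * (1 / 2) * t ^ 10 else if (j : ℕ) = 2 then t ^ 3 else (0 : ℝ)) :
    Lt1 f = 11 ∧
    ∀ (b : ℝ) (g : ℝ → Fin (2 * n) → ℝ),
      g = (fun (t : ℝ) (j : Fin (2 * n)) => if (j : ℕ) = 0 then t ^ 4 else if (j : ℕ) = 1 then (1 / 3) * t ^ 9 + (b / 2) * t ^ 10 else if (j : ℕ) = 2 then t ^ 3 else (0 : ℝ)) →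
      Lt1 g ≠ Lt1 f := by
  have hff : f = fun t : ℝ => Fm n 0 ε (t ^ 4, t ^ 3) := by
    rw [hf]; funext t j; unfold Fm
    split_ifs <;> ring
  have hε0 : ε ≠ 0 := by rcases hε with rfl | rfl <;> norm_num
  have hF : Lt1 f = 11 := by
    rw [hff]
    exact le_antisymm (iSup_le fun L => upper_f n hn L ε hε0) (lower n hn ε)
  refine ⟨hF, ?_⟩
  intro b g hg
  have hgg : g = fun t : ℝ => Fm n 1 b (t ^ 4, t ^ 3) := by
    rw [hg]; funext t j; unfold Fm
    split_ifs <;> ring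
  have hG : Lt1 g ≤ 10 := by
    rw [hgg]
    exact iSup_le fun L => upper_g n hn L b
  rw [hF]
  intro h
  rw [h] at hG
  exact absurd hG (by decide)

end
end
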